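/- For all c > 0 and ε > 0 there exists δ > 0 such that for all sufficiently large N, the following holds: for every p with 0 ≤ p ≤ c/√N, every pair of sets A, B ⊆ {-1,1}^N such that ξ_0(A × B) ≥ 2^{-δN}, and every s ∈ ℝ, one has (1/2)·( e^s · ξ_{-p}(A × B) + e^{-s} · ξ_p(A × B) ) ≥ (1 - ε)·ξ_0(A × B). -/

import Mathlib

/-- Number of coordinates on which `x` and `y` agree. -/
def agree {N : ℕ} (x y : Fin N → Bool) : ℕ :=
  (Finset.univ.filter fun i => x i = y i).card

/-- The probability that `ξ_p` assigns to the pair `(x, y)`. -/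
noncomputable def xiMass (N : ℕ) (p : ℝ) (x y : Fin N → Bool) : ℝ :=
  (1 / 2) ^ N * ((1 + p) / 2) ^ agree x y * ((1 - p) / 2) ^ (N - agree x y)

/-- The probability that `(x,y) ∈ A × B` under `ξ_p`. -/
noncomputable def xiProb (N : ℕ) (p : ℝ) (A B : Finset (Fin N → Bool)) : ℝ :=
  ∑ x ∈ A, ∑ y ∈ B, xiMass N p x y

/-- The sign of the `k`-th coordinate of a point of the cube, with value `1` beyond the dimension. -/
noncomputable def coord {N : ℕ} (k : ℕ) (y : Fin N → Bool) : ℝ :=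
  if h : k < N then (if y ⟨k, h⟩ then 1 else -1) else 1

/-- `φ` depends only on the first `k` coordinates. -/
def PrefixMeas {N : ℕ} (k : ℕ) (φ : (Fin N → Bool) → ℝ) : Prop :=
  ∀ y z, (∀ j : Fin N, (j : ℕ) < k → y j = z j) → φ y = φ z

/-- The points of `B` which agree with `y` on the first `k` coordinates. -/
def prefixFiber {N : ℕ} (B : Finset (Fin N → Bool)) (k : ℕ) (y : Fin N → Bool) :
    Finset (Fin N → Bool) :=
  B.filter fun z => ∀ j : Fin N, (j : ℕ) < k → y j = z j

/-- Conditional expectation, under the uniform distribution on `B`, given the first `k`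
coordinates. -/
noncomputable def condMean {N : ℕ} (B : Finset (Fin N → Bool)) (k : ℕ)
    (g : (Fin N → Bool) → ℝ) (y : Fin N → Bool) : ℝ :=
  (∑ z ∈ prefixFiber B k y, g z) / (prefixFiber B k y).card

/-- Conditional mean of the `k`-th coordinate given the preceding ones. -/
noncomputable def bias {N : ℕ} (B : Finset (Fin N → Bool)) (k : ℕ) (y : Fin N → Bool) : ℝ :=
  condMean B k (coord k) y

/-- Regression coefficient of `g` on the `k`-th coordinate, given the preceding ones. -/
noncomputable def regCoef {N : ℕ} (B : Finset (Fin N → Bool)) (k : ℕ)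
    (g : (Fin N → Bool) → ℝ) (y : Fin N → Bool) : ℝ :=
  condMean B k (fun z => (coord k z - bias B k z) * g z) y / (1 - bias B k y ^ 2)

section PrefixCalculus

variable {N : ℕ}

lemma coord_sq (k : ℕ) (y : Fin N → Bool) : coord k y ^ 2 = 1 := by
  unfold coord; split_ifs <;> norm_num

lemma coord_eq (k : ℕ) (y : Fin N → Bool) : coord k y = 1 ∨ coord k y = -1 := by
  unfold coord; split_ifs <;> simp

lemma abs_coord (k : ℕ) (y : Fin N → Bool) : |coord k y| = 1 := by
  rcases coord_eq k y with h | h <;> simp [h]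

namespace PrefixMeas

lemma coord (k : ℕ) : PrefixMeas (N := N) (k + 1) (coord k) := by
  intro y z h
  unfold _root_.coord
  split_ifs <;> simp_all

lemma mono {k l : ℕ} (hkl : k ≤ l) {φ : (Fin N → Bool) → ℝ} (h : PrefixMeas k φ) :
    PrefixMeas l φ := fun y z hyz => h y z fun j hj => hyz j (hj.trans_le hkl)

lemma const (k : ℕ) (a : ℝ) : PrefixMeas (N := N) k fun _ => a := fun _ _ _ => rfl

lemma comp {k : ℕ} {φ : (Fin N → Bool) → ℝ} (h : PrefixMeas k φ) (F : ℝ → ℝ) :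
    PrefixMeas k fun y => F (φ y) := fun y z hyz => by simp only [h y z hyz]

lemma comp₂ {k : ℕ} {φ ψ : (Fin N → Bool) → ℝ} (h : PrefixMeas k φ) (h' : PrefixMeas k ψ)
    (F : ℝ → ℝ → ℝ) : PrefixMeas k fun y => F (φ y) (ψ y) :=
  fun y z hyz => by simp only [h y z hyz, h' y z hyz]

lemma mul {k : ℕ} {φ ψ : (Fin N → Bool) → ℝ} (h : PrefixMeas k φ) (h' : PrefixMeas k ψ) :
    PrefixMeas k fun y => φ y * ψ y := h.comp₂ h' (· * ·)

lemma sum {ι : Type*} {k : ℕ} {s : Finset ι} {φ : ι → (Fin N → Bool) → ℝ}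
    (h : ∀ i ∈ s, PrefixMeas k (φ i)) : PrefixMeas k fun y => ∑ i ∈ s, φ i y :=
  fun y z hyz => Finset.sum_congr rfl fun i hi => h i hi y z hyz

lemma prod {ι : Type*} {k : ℕ} {s : Finset ι} {φ : ι → (Fin N → Bool) → ℝ}
    (h : ∀ i ∈ s, PrefixMeas k (φ i)) : PrefixMeas k fun y => ∏ i ∈ s, φ i y :=
  fun y z hyz => Finset.prod_congr rfl fun i hi => h i hi y z hyz

end PrefixMeas

variable (B : Finset (Fin N → Bool))

lemma prefixFiber_congr {k : ℕ} {y z : Fin N → Bool}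
    (h : ∀ j : Fin N, (j : ℕ) < k → y j = z j) : prefixFiber B k y = prefixFiber B k z := by
  unfold prefixFiber
  refine Finset.filter_congr fun w _ => forall_congr' fun j => ?_
  exact imp_congr_right fun hj => by rw [h j hj]

lemma self_mem_prefixFiber {k : ℕ} {y : Fin N → Bool} (hy : y ∈ B) :
    y ∈ prefixFiber B k y := by simp [prefixFiber, hy]

lemma card_prefixFiber_pos {k : ℕ} {y : Fin N → Bool} (hy : y ∈ B) :
    (0 : ℝ) < (prefixFiber B k y).card :=
  Nat.cast_pos.2 (Finset.card_pos.2 ⟨y, self_mem_prefixFiber B hy⟩)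

lemma prefixMeas_condMean (k : ℕ) (g : (Fin N → Bool) → ℝ) :
    PrefixMeas k (condMean B k g) := by
  intro y z h
  unfold condMean
  rw [prefixFiber_congr B h]

lemma prefixMeas_bias (k : ℕ) : PrefixMeas k (bias B k) := prefixMeas_condMean B k _

lemma prefixMeas_regCoef (k : ℕ) (g : (Fin N → Bool) → ℝ) : PrefixMeas k (regCoef B k g) :=
  (prefixMeas_condMean B k _).comp₂ (prefixMeas_bias B k) fun a b => a / (1 - b ^ 2)

/-- A function of the first `k` coordinates can be pulled out of the conditional expectation. -/
lemma condMean_mul_left {k : ℕ} {φ : (Fin N → Bool) → ℝ} (hφ : PrefixMeas k φ)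
    (g : (Fin N → Bool) → ℝ) (y : Fin N → Bool) :
    condMean B k (fun z => φ z * g z) y = φ y * condMean B k g y := by
  unfold condMean
  rw [← mul_div_assoc, Finset.mul_sum]
  congr 1
  refine Finset.sum_congr rfl fun z hz => ?_
  rw [hφ y z (Finset.mem_filter.1 hz).2]

lemma condMean_const {k : ℕ} {y : Fin N → Bool} (hy : y ∈ B) (a : ℝ) :
    condMean B k (fun _ => a) y = a := by
  unfold condMean
  have := card_prefixFiber_pos B (k := k) hy
  rw [Finset.sum_const, nsmul_eq_mul]
  field_simp

lemma condMean_add (k : ℕ) (f g : (Fin N → Bool) → ℝ) (y : Fin N → Bool) :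
    condMean B k (fun z => f z + g z) y = condMean B k f y + condMean B k g y := by
  unfold condMean
  rw [Finset.sum_add_distrib, add_div]

lemma sum_condMean (k : ℕ) (g : (Fin N → Bool) → ℝ) :
    ∑ y ∈ B, condMean B k g y = ∑ y ∈ B, g y := by
  unfold condMean
  have h1 : ∀ y ∈ B, (∑ z ∈ prefixFiber B k y, g z) / ((prefixFiber B k y).card : ℝ)
      = ∑ z ∈ B, if (∀ j : Fin N, (j : ℕ) < k → z j = y j) then
          g z / (prefixFiber B k z).card else 0 := by
    intro y _
    rw [Finset.sum_div, ← Finset.sum_filter]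
    refine Finset.sum_congr ?_ ?_
    · ext z; simp [prefixFiber, eq_comm]
    · intro z hz
      rw [prefixFiber_congr B (Finset.mem_filter.1 hz).2]
  rw [Finset.sum_congr rfl h1, Finset.sum_comm]
  refine Finset.sum_congr rfl fun z hz => ?_
  rw [← Finset.sum_filter, Finset.sum_const, nsmul_eq_mul]
  have := card_prefixFiber_pos B (k := k) hz
  change ((prefixFiber B k z).card : ℝ) * _ = _
  field_simp

lemma sum_mul_condMean {k : ℕ} {φ : (Fin N → Bool) → ℝ} (hφ : PrefixMeas k φ)
    (g : (Fin N → Bool) → ℝ) :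
    ∑ y ∈ B, φ y * condMean B k g y = ∑ y ∈ B, φ y * g y := by
  rw [← sum_condMean B k fun y => φ y * g y]
  exact Finset.sum_congr rfl fun y _ => (condMean_mul_left B hφ g y).symm

lemma abs_bias_le (k : ℕ) (y : Fin N → Bool) : |bias B k y| ≤ 1 := by
  unfold bias condMean
  rw [abs_div, Nat.abs_cast]
  refine div_le_one_of_le₀ ?_ (Nat.cast_nonneg _)
  refine (Finset.abs_sum_le_sum_abs _ _).trans ?_
  simp [abs_coord]

lemma bias_sq_le (k : ℕ) (y : Fin N → Bool) : bias B k y ^ 2 ≤ 1 := by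
  rw [← sq_abs]
  exact pow_le_one₀ (abs_nonneg _) (abs_bias_le B k y)

/-- Conditional mean of a function which is affine in the `k`-th coordinate. -/
lemma condMean_affine {k : ℕ} {α β : (Fin N → Bool) → ℝ} (hα : PrefixMeas k α)
    (hβ : PrefixMeas k β) {y : Fin N → Bool} (hy : y ∈ B) :
    condMean B k (fun z => α z + β z * coord k z) y = α y + β y * bias B k y := by
  rw [condMean_add, condMean_mul_left B hβ]
  have := condMean_mul_left B hα (fun _ => 1) y
  simp only [mul_one] at this
  rw [this, condMean_const B hy, mul_one]
  rfl

lemma condMean_centered {k : ℕ} {y : Fin N → Bool} (hy : y ∈ B) :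
    condMean B k (fun z => coord k z - bias B k z) y = 0 := by
  have := condMean_affine B (k := k) (α := fun z => -bias B k z) (β := fun _ => 1)
    ((prefixMeas_bias B k).comp fun t => -t) (PrefixMeas.const k 1) hy
  rw [show (fun z => coord k z - bias B k z) = fun z => -bias B k z + 1 * coord k z by
    ext; ring, this]
  ring

lemma condMean_centered_sq {k : ℕ} {y : Fin N → Bool} (hy : y ∈ B) :
    condMean B k (fun z => (coord k z - bias B k z) ^ 2) y = 1 - bias B k y ^ 2 := by
  have := condMean_affine B (k := k) (α := fun z => 1 + bias B k z ^ 2)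
    (β := fun z => -2 * bias B k z)
    ((prefixMeas_bias B k).comp fun t => 1 + t ^ 2) ((prefixMeas_bias B k).comp fun t => -2 * t) hy
  rw [show (fun z => (coord k z - bias B k z) ^ 2)
    = fun z => 1 + bias B k z ^ 2 + -2 * bias B k z * coord k z by
      ext z; linear_combination coord_sq k z, this]
  ring

lemma condMean_centered_mul {k : ℕ} {y : Fin N → Bool} (hy : y ∈ B)
    (g : (Fin N → Bool) → ℝ) :
    condMean B k (fun z => (coord k z - bias B k z) * g z) y
      = (1 - bias B k y ^ 2) * regCoef B k g y := by
  unfold regCoef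
  by_cases h : 1 - bias B k y ^ 2 = 0
  · rw [h, zero_mul]
    have h0 := condMean_centered_sq B (k := k) hy
    rw [h] at h0
    unfold condMean at h0 ⊢
    rcases div_eq_zero_iff.1 h0 with h0 | h0
    · rw [Finset.sum_eq_zero_iff_of_nonneg fun _ _ => sq_nonneg _] at h0
      rw [Finset.sum_eq_zero, zero_div]
      intro z hz
      rw [pow_eq_zero_iff two_ne_zero |>.1 (h0 z hz), zero_mul]
    · exact absurd h0 (card_prefixFiber_pos B hy).ne'
  · field_simp

lemma sum_mul_centered {k : ℕ} {φ : (Fin N → Bool) → ℝ} (hφ : PrefixMeas k φ) :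
    ∑ y ∈ B, φ y * (coord k y - bias B k y) = 0 := by
  rw [← sum_mul_condMean B hφ]
  exact Finset.sum_eq_zero fun y hy => by rw [condMean_centered B hy, mul_zero]

lemma sum_mul_centered_sq {k : ℕ} {φ : (Fin N → Bool) → ℝ} (hφ : PrefixMeas k φ) :
    ∑ y ∈ B, φ y * (coord k y - bias B k y) ^ 2 = ∑ y ∈ B, φ y * (1 - bias B k y ^ 2) := by
  rw [← sum_mul_condMean B hφ]
  exact Finset.sum_congr rfl fun y hy => by rw [condMean_centered_sq B hy]

lemma sum_mul_centered_mul {k : ℕ} {φ : (Fin N → Bool) → ℝ} (hφ : PrefixMeas k φ)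
    (g : (Fin N → Bool) → ℝ) :
    ∑ y ∈ B, φ y * ((coord k y - bias B k y) * g y)
      = ∑ y ∈ B, φ y * ((1 - bias B k y ^ 2) * regCoef B k g y) := by
  rw [← sum_mul_condMean B hφ]
  exact Finset.sum_congr rfl fun y hy => by rw [condMean_centered_mul B hy]

lemma regCoef_sum {ι : Type*} (s : Finset ι) (a : ι → ℝ) (g : ι → (Fin N → Bool) → ℝ) (k : ℕ)
    (y : Fin N → Bool) :
    regCoef B k (fun z => ∑ i ∈ s, a i * g i z) y = ∑ i ∈ s, a i * regCoef B k (g i) y := by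
  unfold regCoef condMean
  simp_rw [Finset.mul_sum]
  rw [Finset.sum_comm, Finset.sum_div, Finset.sum_div]
  refine Finset.sum_congr rfl fun i _ => ?_
  rw [← mul_div_assoc, ← mul_div_assoc, Finset.mul_sum]
  congr 2
  exact Finset.sum_congr rfl fun z _ => by ring

lemma regCoef_self {k : ℕ} {y : Fin N → Bool} (hy : y ∈ B) (h : bias B k y ^ 2 < 1) :
    regCoef B k (coord k) y = 1 := by
  unfold regCoef
  rw [div_eq_one_iff_eq (by linarith), ← condMean_centered_sq B hy]
  have h1 := condMean_mul_left B (prefixMeas_bias B k) (fun z => coord k z - bias B k z) y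
  rw [condMean_centered B hy, mul_zero] at h1
  rw [show (fun z => (coord k z - bias B k z) * coord k z) = fun z =>
    (coord k z - bias B k z) ^ 2 + bias B k z * (coord k z - bias B k z) by ext; ring,
    condMean_add, h1, add_zero]

/-- Bessel's inequality for the martingale differences of `g`. -/
lemma sum_regCoef_sq_le (n : ℕ) (g : (Fin N → Bool) → ℝ) :
    ∑ k ∈ Finset.range n, ∑ y ∈ B, (1 - bias B k y ^ 2) * regCoef B k g y ^ 2
      ≤ ∑ y ∈ B, g y ^ 2 := by
  set D : ℕ → (Fin N → Bool) → ℝ :=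
    fun n y => ∑ k ∈ Finset.range n, regCoef B k g y * (coord k y - bias B k y) with hD
  set T : ℕ → ℝ :=
    fun n => ∑ k ∈ Finset.range n, ∑ y ∈ B, (1 - bias B k y ^ 2) * regCoef B k g y ^ 2 with hT
  have hDm : ∀ n, PrefixMeas n (D n) := fun n => PrefixMeas.sum fun k hk => by
    have hk := Finset.mem_range.1 hk
    exact ((prefixMeas_regCoef B k g).mono hk.le).mul
      (((PrefixMeas.coord k).mono hk).comp₂ ((prefixMeas_bias B k).mono hk.le) fun a b => a - b)
  have h1 : ∑ y ∈ B, g y * D n y = T n := by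
    simp only [hD, hT, Finset.mul_sum]
    rw [Finset.sum_comm]
    refine Finset.sum_congr rfl fun k _ => ?_
    rw [show ∑ y ∈ B, g y * (regCoef B k g y * (coord k y - bias B k y))
      = ∑ y ∈ B, regCoef B k g y * ((coord k y - bias B k y) * g y) from
        Finset.sum_congr rfl fun y _ => by ring,
      sum_mul_centered_mul B (prefixMeas_regCoef B k g)]
    exact Finset.sum_congr rfl fun y _ => by ring
  have h2 : ∀ n, ∑ y ∈ B, D n y ^ 2 = T n := by
    intro n
    induction n with
    | zero => simp [hD, hT]
    | succ n ih =>
      have e1 : ∀ y, D (n + 1) y = D n y + regCoef B n g y * (coord n y - bias B n y) :=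
        fun y => Finset.sum_range_succ _ _
      have e2 : T (n + 1) = T n + ∑ y ∈ B, (1 - bias B n y ^ 2) * regCoef B n g y ^ 2 :=
        Finset.sum_range_succ _ _
      have e3 := sum_mul_centered B (((hDm n).mul (prefixMeas_regCoef B n g)).comp fun t => 2 * t)
      have e4 := sum_mul_centered_sq B ((prefixMeas_regCoef B n g).comp fun t => t ^ 2)
      simp only [e1, e2, ← ih]
      rw [show ∑ y ∈ B, (1 - bias B n y ^ 2) * regCoef B n g y ^ 2
        = ∑ y ∈ B, regCoef B n g y ^ 2 * (1 - bias B n y ^ 2) from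
          Finset.sum_congr rfl fun y _ => by ring, ← e4, ← add_zero (∑ y ∈ B, D n y ^ 2), ← e3,
        ← Finset.sum_add_distrib, ← Finset.sum_add_distrib]
      exact Finset.sum_congr rfl fun y _ => by ring
  have h3 : 0 ≤ ∑ y ∈ B, (g y - D n y) ^ 2 := Finset.sum_nonneg fun _ _ => sq_nonneg _
  have h4 : ∑ y ∈ B, (g y - D n y) ^ 2
      = ∑ y ∈ B, g y ^ 2 - 2 * ∑ y ∈ B, g y * D n y + ∑ y ∈ B, D n y ^ 2 := by
    rw [Finset.mul_sum, ← Finset.sum_sub_distrib, ← Finset.sum_add_distrib]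
    exact Finset.sum_congr rfl fun y _ => by ring
  rw [h1, h2] at h4
  change T n ≤ _
  linarith

end PrefixCalculus

section Entropy

variable {N : ℕ} (B : Finset (Fin N → Bool))

lemma card_prefixFiber_succ {k : ℕ} (hk : k < N) {y : Fin N → Bool} (hy : y ∈ B) :
    2 * ((prefixFiber B (k + 1) y).card : ℝ)
      = (prefixFiber B k y).card * (1 + bias B k y * coord k y) := by
  have h1 : prefixFiber B (k + 1) y = (prefixFiber B k y).filter fun z => y ⟨k, hk⟩ = z ⟨k, hk⟩ := by
    ext z
    simp only [prefixFiber, Finset.mem_filter, and_assoc]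
    refine and_congr_right fun _ => ⟨fun h => ⟨fun j hj => h j (by omega), h _ (by simp)⟩, ?_⟩
    rintro ⟨h, h'⟩ j hj
    rcases Nat.lt_succ_iff_lt_or_eq.1 hj with hj | hj
    · exact h j hj
    · have : j = ⟨k, hk⟩ := Fin.ext hj
      rw [this]; exact h'
  have h2 : ((prefixFiber B (k + 1) y).card : ℝ)
      = ∑ z ∈ prefixFiber B k y, (1 + coord k y * coord k z) / 2 := by
    rw [h1, Finset.card_eq_sum_ones, Nat.cast_sum, Finset.sum_filter]
    refine Finset.sum_congr rfl fun z _ => ?_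
    simp only [coord, hk, dif_pos]
    cases y ⟨k, hk⟩ <;> cases z ⟨k, hk⟩ <;> norm_num
  have h3 : ∑ z ∈ prefixFiber B k y, coord k z = (prefixFiber B k y).card * bias B k y := by
    have := card_prefixFiber_pos B (k := k) hy
    unfold bias condMean
    field_simp
  rw [h2, ← Finset.sum_div, Finset.sum_add_distrib, ← Finset.mul_sum, h3]
  simp
  ring

lemma one_add_bias_mul_coord_pos {k : ℕ} (hk : k < N) {y : Fin N → Bool} (hy : y ∈ B) :
    0 < 1 + bias B k y * coord k y := by
  have h1 := card_prefixFiber_pos B (k := k) hy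
  have h2 := card_prefixFiber_pos B (k := k + 1) hy
  have h3 := card_prefixFiber_succ B hk hy
  by_contra! h
  nlinarith [mul_nonpos_of_nonneg_of_nonpos h1.le h]

lemma prod_one_add_bias_mul_coord {y : Fin N → Bool} (hy : y ∈ B) :
    ∏ k ∈ Finset.range N, (1 + bias B k y * coord k y) = 2 ^ N / B.card := by
  have hB : (0 : ℝ) < B.card := Nat.cast_pos.2 (Finset.card_pos.2 ⟨y, hy⟩)
  have key : ∀ n ≤ N, ∏ k ∈ Finset.range n, (1 + bias B k y * coord k y)
      = 2 ^ n * (prefixFiber B n y).card / B.card := by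
    intro n
    induction n with
    | zero =>
      intro _
      simp [prefixFiber, hB.ne']
    | succ n ih =>
      intro hn
      rw [Finset.prod_range_succ, ih (by omega), pow_succ, mul_assoc (2 ^ n) 2,
        card_prefixFiber_succ B hn hy]
      ring
  rw [key N le_rfl]
  have : prefixFiber B N y = {y} := by
    ext z
    simp only [prefixFiber, Finset.mem_filter, Finset.mem_singleton]
    refine ⟨fun h => funext fun j => (h.2 j j.2).symm, ?_⟩
    rintro rfl
    exact ⟨hy, fun _ _ => rfl⟩
  simp [this]

lemma two_mul_one_sub_inv_sqrt_le_log {t : ℝ} (ht : 0 < t) :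
    2 * (1 - (Real.sqrt t)⁻¹) ≤ Real.log t := by
  have h := Real.one_sub_inv_le_log_of_pos (Real.sqrt_pos.2 ht)
  rw [Real.log_sqrt ht.le] at h
  linarith

lemma sqrt_one_add_add_sqrt_one_sub_le {b : ℝ} (hb : |b| ≤ 1) :
    Real.sqrt (1 + b) + Real.sqrt (1 - b) ≤ 2 - b ^ 2 / 4 := by
  obtain ⟨h1, h2⟩ := abs_le.1 hb
  have e1 := Real.sq_sqrt (show 0 ≤ 1 + b by linarith)
  have e2 := Real.sq_sqrt (show 0 ≤ 1 - b by linarith)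
  set u := Real.sqrt (1 + b)
  set v := Real.sqrt (1 - b)
  have hu : 0 ≤ u := Real.sqrt_nonneg _
  have hv : 0 ≤ v := Real.sqrt_nonneg _
  have huv : (u * v) ^ 2 = 1 - b ^ 2 := by rw [mul_pow, e1, e2]; ring
  have h3 : u * v ≤ 1 - b ^ 2 / 2 := by
    refine abs_le_of_sq_le_sq' ?_ (by nlinarith) |>.2
    rw [huv]; nlinarith [sq_nonneg (b ^ 2)]
  have h4 : (u + v) ^ 2 ≤ (2 - b ^ 2 / 4) ^ 2 := by nlinarith [sq_nonneg (b ^ 2)]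
  exact abs_le_of_sq_le_sq' h4 (by nlinarith) |>.2

lemma condMean_inv_sqrt_le {k : ℕ} {y : Fin N → Bool} (hy : y ∈ B) :
    condMean B k (fun z => (Real.sqrt (1 + bias B k z * coord k z))⁻¹) y
      ≤ 1 - bias B k y ^ 2 / 8 := by
  have hm := prefixMeas_bias B k
  have := condMean_affine B (k := k)
    (α := fun z => ((Real.sqrt (1 + bias B k z))⁻¹ + (Real.sqrt (1 - bias B k z))⁻¹) / 2)
    (β := fun z => ((Real.sqrt (1 + bias B k z))⁻¹ - (Real.sqrt (1 - bias B k z))⁻¹) / 2)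
    (hm.comp fun b => ((Real.sqrt (1 + b))⁻¹ + (Real.sqrt (1 - b))⁻¹) / 2)
    (hm.comp fun b => ((Real.sqrt (1 + b))⁻¹ - (Real.sqrt (1 - b))⁻¹) / 2) hy
  rw [show (fun z => (Real.sqrt (1 + bias B k z * coord k z))⁻¹) = _ from ?_, this]
  · have hb := abs_bias_le B k y
    obtain ⟨h1, h2⟩ := abs_le.1 hb
    have h3 := sqrt_one_add_add_sqrt_one_sub_le hb
    have key : ∀ t : ℝ, t * (Real.sqrt t)⁻¹ = Real.sqrt t := fun t => by
      rw [← div_eq_mul_inv, Real.div_sqrt]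
    have e1 := key (1 + bias B k y)
    have e2 := key (1 - bias B k y)
    linarith
  · ext z
    rcases coord_eq k z with h | h <;> rw [h]
    · ring_nf
    · rw [show 1 + bias B k z * -1 = 1 - bias B k z by ring]
      ring

/-- Large sets have small biases on average. -/
lemma sum_bias_sq_le :
    ∑ k ∈ Finset.range N, ∑ y ∈ B, bias B k y ^ 2
      ≤ 4 * (B.card * Real.log (2 ^ N / B.card)) := by
  have h1 : ∀ k ∈ Finset.range N, ∑ y ∈ B, bias B k y ^ 2
      ≤ 4 * ∑ y ∈ B, Real.log (1 + bias B k y * coord k y) := by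
    intro k hk
    have hk := Finset.mem_range.1 hk
    have h2 : ∑ y ∈ B, 2 * (1 - (Real.sqrt (1 + bias B k y * coord k y))⁻¹)
        ≤ ∑ y ∈ B, Real.log (1 + bias B k y * coord k y) :=
      Finset.sum_le_sum fun y hy =>
        two_mul_one_sub_inv_sqrt_le_log (one_add_bias_mul_coord_pos B hk hy)
    have h3 : ∑ y ∈ B, (Real.sqrt (1 + bias B k y * coord k y))⁻¹
        ≤ ∑ y ∈ B, (1 - bias B k y ^ 2 / 8) := by
      rw [← sum_condMean B k]
      exact Finset.sum_le_sum fun y hy => condMean_inv_sqrt_le B hy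
    rw [← Finset.mul_sum, Finset.sum_sub_distrib] at h2
    rw [Finset.sum_sub_distrib, ← Finset.sum_div] at h3
    linarith
  refine (Finset.sum_le_sum h1).trans (le_of_eq ?_)
  rw [← Finset.mul_sum, Finset.sum_comm]
  congr 1
  rw [← nsmul_eq_mul, ← Finset.sum_const]
  refine Finset.sum_congr rfl fun y hy => ?_
  rw [← Real.log_prod, prod_one_add_bias_mul_coord B hy]
  exact fun k hk => ne_of_gt (one_add_bias_mul_coord_pos B (Finset.mem_range.1 hk) hy)

/-- Squared norm of the regression coefficients of the other coordinates on the `k`-th one. -/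
noncomputable def offSq (k : ℕ) (y : Fin N → Bool) : ℝ :=
  ∑ j ∈ (Finset.range N).erase k, regCoef B k (coord j) y ^ 2

lemma offSq_nonneg (k : ℕ) (y : Fin N → Bool) : 0 ≤ offSq B k y :=
  Finset.sum_nonneg fun _ _ => sq_nonneg _

lemma prefixMeas_offSq (k : ℕ) : PrefixMeas k (offSq B k) :=
  PrefixMeas.sum fun _ _ => (prefixMeas_regCoef B k _).comp fun t => t ^ 2

lemma sum_offSq_le :
    ∑ k ∈ Finset.range N, ∑ y ∈ B, (1 - bias B k y ^ 2) * offSq B k y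
      ≤ ∑ k ∈ Finset.range N, ∑ y ∈ B, bias B k y ^ 2 := by
  have h1 : ∑ j ∈ Finset.range N, ∑ k ∈ Finset.range N, ∑ y ∈ B,
      (1 - bias B k y ^ 2) * regCoef B k (coord j) y ^ 2
        ≤ ∑ k ∈ Finset.range N, ∑ y ∈ B, 1 := by
    refine Finset.sum_le_sum fun j _ => (sum_regCoef_sq_le B N _).trans ?_
    simp [coord_sq]
  rw [Finset.sum_comm] at h1
  have h2 : ∑ k ∈ Finset.range N, ∑ y ∈ B,
      ((1 - bias B k y ^ 2) + (1 - bias B k y ^ 2) * offSq B k y)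
      ≤ ∑ k ∈ Finset.range N, ∑ j ∈ Finset.range N, ∑ y ∈ B,
      (1 - bias B k y ^ 2) * regCoef B k (coord j) y ^ 2 := by
    refine Finset.sum_le_sum fun k hk => ?_
    rw [Finset.sum_comm]
    refine Finset.sum_le_sum fun y hy => ?_
    rw [← Finset.mul_sum, ← Finset.add_sum_erase _ _ hk, mul_add]
    refine add_le_add ?_ le_rfl
    rcases (bias_sq_le B k y).lt_or_eq with h | h
    · rw [regCoef_self B hy h]; simp
    · simp [h]
  have h3 := h2.trans h1
  simp only [Finset.sum_add_distrib, Finset.sum_sub_distrib] at h3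
  linarith

end Entropy

section Tilt

variable {N : ℕ} (B : Finset (Fin N → Bool)) (a : ℝ) (u : ℕ → (Fin N → Bool) → ℝ)

/-- The martingale increment driven by the predictable control `a * u`. -/
noncomputable def tiltStep (k : ℕ) (y : Fin N → Bool) : ℝ :=
  a * u k y * (coord k y - bias B k y)

/-- The density, relative to the uniform distribution on `B`, of the distribution steered by the
control `a * u` during the first `n` steps. -/
noncomputable def tilt (n : ℕ) (y : Fin N → Bool) : ℝ :=
  ∏ k ∈ Finset.range n, (1 + tiltStep B a u k y)

/-- Energy spent by the control `u` during the first `n` steps. -/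
noncomputable def energy (n : ℕ) (y : Fin N → Bool) : ℝ :=
  ∑ k ∈ Finset.range n, (1 - bias B k y ^ 2) * u k y ^ 2

variable {u}

lemma prefixMeas_tiltStep {k : ℕ} (hu : PrefixMeas k (u k)) :
    PrefixMeas (k + 1) (tiltStep B a u k) :=
  ((hu.mono k.le_succ).comp fun t => a * t).mul
    ((PrefixMeas.coord k).comp₂ ((prefixMeas_bias B k).mono k.le_succ) fun s t => s - t)

lemma prefixMeas_tilt (hu : ∀ k, PrefixMeas k (u k)) (n : ℕ) : PrefixMeas n (tilt B a u n) :=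
  PrefixMeas.prod fun k hk =>
    ((prefixMeas_tiltStep B a (hu k)).mono (Finset.mem_range.1 hk)).comp fun t => 1 + t

lemma tilt_succ (n : ℕ) (y : Fin N → Bool) :
    tilt B a u (n + 1) y = tilt B a u n y * (1 + tiltStep B a u n y) :=
  Finset.prod_range_succ _ _

lemma sum_mul_tiltStep {k : ℕ} (hu : PrefixMeas k (u k)) {φ : (Fin N → Bool) → ℝ}
    (hφ : PrefixMeas k φ) : ∑ y ∈ B, φ y * tiltStep B a u k y = 0 := by
  rw [← sum_mul_centered B (hφ.mul (hu.comp fun t => a * t))]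
  exact Finset.sum_congr rfl fun y _ => by unfold tiltStep; ring

lemma sum_mul_tiltStep_sq {k : ℕ} (hu : PrefixMeas k (u k)) {φ : (Fin N → Bool) → ℝ}
    (hφ : PrefixMeas k φ) : ∑ y ∈ B, φ y * tiltStep B a u k y ^ 2
      = ∑ y ∈ B, φ y * (a ^ 2 * ((1 - bias B k y ^ 2) * u k y ^ 2)) := by
  have := sum_mul_centered_sq B (hφ.mul (hu.comp fun t => a ^ 2 * t ^ 2))
  rw [show ∑ y ∈ B, φ y * (a ^ 2 * ((1 - bias B k y ^ 2) * u k y ^ 2))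
    = ∑ y ∈ B, φ y * (a ^ 2 * u k y ^ 2) * (1 - bias B k y ^ 2) from
      Finset.sum_congr rfl fun y _ => by ring, ← this]
  exact Finset.sum_congr rfl fun y _ => by unfold tiltStep; ring

/-- The densities `tilt` form a martingale. -/
lemma sum_mul_tilt (hu : ∀ k, PrefixMeas k (u k)) {k n : ℕ} (hkn : k ≤ n)
    {φ : (Fin N → Bool) → ℝ} (hφ : PrefixMeas k φ) :
    ∑ y ∈ B, φ y * tilt B a u n y = ∑ y ∈ B, φ y * tilt B a u k y := by
  induction n, hkn using Nat.le_induction with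
  | base => rfl
  | succ n hn ih =>
    rw [← ih, ← add_zero (∑ y ∈ B, φ y * tilt B a u n y),
      ← sum_mul_tiltStep B a (hu n) ((hφ.mono hn).mul (prefixMeas_tilt B a hu n)),
      ← Finset.sum_add_distrib]
    exact Finset.sum_congr rfl fun y _ => by rw [tilt_succ]; ring

lemma sum_tilt (hu : ∀ k, PrefixMeas k (u k)) (n : ℕ) :
    ∑ y ∈ B, tilt B a u n y = B.card := by
  have := sum_mul_tilt B a hu (Nat.zero_le n) (PrefixMeas.const 0 1)
  simpa [tilt] using this

/-- Effect of the control on the mean of a function. -/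
lemma sum_tilt_mul (hu : ∀ k, PrefixMeas k (u k)) (g : (Fin N → Bool) → ℝ) (n : ℕ) :
    ∑ y ∈ B, tilt B a u n y * g y = ∑ y ∈ B, g y
      + a * ∑ y ∈ B, tilt B a u n y *
        ∑ k ∈ Finset.range n, (1 - bias B k y ^ 2) * (u k y * regCoef B k g y) := by
  have h1 : ∀ m ≤ n, ∑ y ∈ B, tilt B a u m y * g y = ∑ y ∈ B, g y
      + a * ∑ k ∈ Finset.range m, ∑ y ∈ B,
        (1 - bias B k y ^ 2) * (u k y * regCoef B k g y) * tilt B a u n y := by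
    intro m
    induction m with
    | zero => simp [tilt]
    | succ m ih =>
      intro hm
      have e1 := sum_mul_centered_mul B
        ((prefixMeas_tilt B a hu m).mul ((hu m).comp fun t => a * t)) g
      have hφ : PrefixMeas m fun y => (1 - bias B m y ^ 2) * (u m y * regCoef B m g y) :=
        ((prefixMeas_bias B m).comp fun t => 1 - t ^ 2).mul
          ((hu m).mul (prefixMeas_regCoef B m g))
      have e2 := sum_mul_tilt B a hu (show m ≤ n by omega) hφ
      rw [Finset.sum_range_succ, mul_add, ← add_assoc, ← ih (by omega), e2, Finset.mul_sum,
        ← sub_eq_iff_eq_add', ← Finset.sum_sub_distrib]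
      calc _ = ∑ y ∈ B, tilt B a u m y * (a * u m y) * ((coord m y - bias B m y) * g y) :=
            Finset.sum_congr rfl fun y _ => by rw [tilt_succ]; unfold tiltStep; ring
        _ = _ := by
            rw [e1]
            exact Finset.sum_congr rfl fun y _ => by ring
  rw [h1 n le_rfl, Finset.sum_comm]
  congr 2
  refine Finset.sum_congr rfl fun y _ => ?_
  rw [Finset.mul_sum]
  exact Finset.sum_congr rfl fun k _ => by ring

/-- Exponential bound on the second moment of the density. -/
lemma sum_tilt_sq_mul_exp_le (hu : ∀ k, PrefixMeas k (u k)) (n : ℕ) :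
    ∑ y ∈ B, tilt B a u n y ^ 2 * Real.exp (-(a ^ 2 * energy B u n y)) ≤ B.card := by
  induction n with
  | zero => simp [tilt, energy]
  | succ n ih =>
    refine le_trans ?_ ih
    have hE : PrefixMeas n (energy B u n) := PrefixMeas.sum fun k hk => by
      have hk := (Finset.mem_range.1 hk).le
      exact (((prefixMeas_bias B k).comp fun t => 1 - t ^ 2).mul ((hu k).comp fun t => t ^ 2)).mono hk
    set q : (Fin N → Bool) → ℝ := fun y => a ^ 2 * ((1 - bias B n y ^ 2) * u n y ^ 2) with hq
    have hqm : PrefixMeas n q := (((prefixMeas_bias B n).comp fun t => 1 - t ^ 2).mul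
      ((hu n).comp fun t => t ^ 2)).comp fun t => a ^ 2 * t
    set W : (Fin N → Bool) → ℝ :=
      fun y => tilt B a u n y ^ 2 * Real.exp (-(a ^ 2 * energy B u n y)) * Real.exp (-q y) with hW
    have hWm : PrefixMeas n W :=
      ((prefixMeas_tilt B a hu n).comp₂ hE fun s t => s ^ 2 * Real.exp (-(a ^ 2 * t))).mul
        (hqm.comp fun t => Real.exp (-t))
    have e1 : ∑ y ∈ B, tilt B a u (n + 1) y ^ 2 * Real.exp (-(a ^ 2 * energy B u (n + 1) y))
        = ∑ y ∈ B, W y + 2 * ∑ y ∈ B, W y * tiltStep B a u n y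
          + ∑ y ∈ B, W y * tiltStep B a u n y ^ 2 := by
      rw [Finset.mul_sum, ← Finset.sum_add_distrib, ← Finset.sum_add_distrib]
      refine Finset.sum_congr rfl fun y _ => ?_
      have : energy B u (n + 1) y = energy B u n y + (1 - bias B n y ^ 2) * u n y ^ 2 :=
        Finset.sum_range_succ _ _
      rw [tilt_succ, this, mul_add (a ^ 2), neg_add, Real.exp_add]
      simp only [hW, hq]
      ring
    rw [e1, sum_mul_tiltStep B a (hu n) hWm, sum_mul_tiltStep_sq B a (hu n) hWm, mul_zero,
      add_zero, ← Finset.sum_add_distrib]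
    refine Finset.sum_le_sum fun y _ => ?_
    have e2 : W y + W y * (a ^ 2 * ((1 - bias B n y ^ 2) * u n y ^ 2))
        = tilt B a u n y ^ 2 * Real.exp (-(a ^ 2 * energy B u n y)) *
          ((q y + 1) * Real.exp (-q y)) := by
      simp only [hW, hq]; ring
    rw [e2]
    refine mul_le_of_le_one_right (by positivity) ?_
    rw [Real.exp_neg, ← div_eq_mul_inv, div_le_one (Real.exp_pos _)]
    exact Real.add_one_le_exp _

lemma abs_log_one_add_sub_le {t : ℝ} (ht : |t| ≤ 1 / 2) :
    |Real.log (1 + t) - (t - t ^ 2 / 2)| ≤ 2 * |t| ^ 3 := by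
  have h := Real.abs_log_sub_add_sum_range_le (x := -t) (by rw [abs_neg]; linarith) 2
  simp only [Finset.sum_range_succ, Finset.sum_range_zero, abs_neg, sub_neg_eq_add] at h
  norm_num at h
  have h2 : |t| ^ 3 / (1 - |t|) ≤ 2 * |t| ^ 3 := by
    rw [div_le_iff₀ (by linarith)]
    nlinarith [pow_nonneg (abs_nonneg t) 3]
  calc _ = |-t + t ^ 2 / 2 + Real.log (1 + t)| := by congr 1; ring
    _ ≤ _ := h.trans h2

lemma one_add_mul_log_one_add_le {s ρ : ℝ} (hs : |s| ≤ ρ) (hρ : ρ ≤ 1 / 2) :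
    (1 + s) * Real.log (1 + s) ≤ s + (1 / 2 + 4 * ρ) * s ^ 2 := by
  have h := (abs_le.1 (abs_log_one_add_sub_le (hs.trans hρ))).2
  obtain ⟨h1, h2⟩ := abs_le.1 (hs.trans hρ)
  have h3 : (1 + s) * Real.log (1 + s) ≤ (1 + s) * (s - s ^ 2 / 2 + 2 * |s| ^ 3) :=
    mul_le_mul_of_nonneg_left (by linarith) (by linarith)
  have h4 : |s| ^ 3 = |s| * s ^ 2 := by rw [pow_succ', sq_abs]
  have h5 : |s| * s ^ 2 ≤ ρ * s ^ 2 := mul_le_mul_of_nonneg_right hs (sq_nonneg s)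
  have h6 : -(s * s ^ 2) ≤ |s| * s ^ 2 := by nlinarith [neg_abs_le s, sq_nonneg s]
  have h7 : s * (|s| * s ^ 2) ≤ 1 / 2 * (|s| * s ^ 2) :=
    mul_le_mul_of_nonneg_right h2 (by positivity)
  have h8 : 0 ≤ |s| * s ^ 2 := by positivity
  rw [h4] at h3
  linarith

/-- Relative entropy of the steered distribution. -/
lemma sum_tilt_mul_log_le (hu : ∀ k, PrefixMeas k (u k)) {ρ : ℝ} (hρ : ρ ≤ 1 / 2)
    (hs : ∀ k, ∀ y, |tiltStep B a u k y| ≤ ρ) (n : ℕ) :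
    ∑ y ∈ B, tilt B a u n y * Real.log (tilt B a u n y)
      ≤ (1 / 2 + 4 * ρ) * a ^ 2 * ∑ y ∈ B, tilt B a u n y * energy B u n y := by
  have hpos : ∀ k y, 0 < 1 + tiltStep B a u k y := fun k y => by
    linarith [(abs_le.1 ((hs k y).trans hρ)).1]
  have hL : ∀ m y, 0 < tilt B a u m y := fun m y => Finset.prod_pos fun k _ => hpos k y
  have h1 : ∀ k ∈ Finset.range n, ∑ y ∈ B, Real.log (1 + tiltStep B a u k y) * tilt B a u n y
      ≤ ∑ y ∈ B, (1 / 2 + 4 * ρ) * a ^ 2 * ((1 - bias B k y ^ 2) * u k y ^ 2) * tilt B a u n y := by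
    intro k hk
    have hk := Finset.mem_range.1 hk
    have m1 : PrefixMeas k fun y => (1 / 2 + 4 * ρ) * a ^ 2 * ((1 - bias B k y ^ 2) * u k y ^ 2) :=
      (((prefixMeas_bias B k).comp fun t => 1 - t ^ 2).mul ((hu k).comp fun t => t ^ 2)).comp
        fun t => (1 / 2 + 4 * ρ) * a ^ 2 * t
    rw [sum_mul_tilt B a hu hk
      ((prefixMeas_tiltStep B a (hu k)).comp fun t => Real.log (1 + t)),
      sum_mul_tilt B a hu hk.le m1]
    calc _ ≤ ∑ y ∈ B, (tilt B a u k y * tiltStep B a u k y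
            + (1 / 2 + 4 * ρ) * (tilt B a u k y * tiltStep B a u k y ^ 2)) := by
          refine Finset.sum_le_sum fun y _ => ?_
          have := mul_le_mul_of_nonneg_left (one_add_mul_log_one_add_le (hs k y) hρ) (hL k y).le
          rw [tilt_succ]
          linarith
      _ = _ := by
          rw [Finset.sum_add_distrib, ← Finset.mul_sum,
            sum_mul_tiltStep B a (hu k) (prefixMeas_tilt B a hu k),
            sum_mul_tiltStep_sq B a (hu k) (prefixMeas_tilt B a hu k), zero_add, Finset.mul_sum]
          exact Finset.sum_congr rfl fun y _ => by ring
  calc _ = ∑ k ∈ Finset.range n, ∑ y ∈ B,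
        Real.log (1 + tiltStep B a u k y) * tilt B a u n y := by
        rw [Finset.sum_comm]
        refine Finset.sum_congr rfl fun y _ => ?_
        rw [← Finset.sum_mul, mul_comm, tilt, Real.log_prod fun k _ => (hpos k y).ne']
    _ ≤ _ := Finset.sum_le_sum h1
    _ = _ := by
        rw [Finset.sum_comm, Finset.mul_sum]
        refine Finset.sum_congr rfl fun y _ => ?_
        rw [energy, Finset.mul_sum, Finset.mul_sum]
        exact Finset.sum_congr rfl fun k _ => by ring

end Tilt

section Concentration

open MeasureTheory

variable {N : ℕ}

lemma sum_exp_coord_le (a : Fin N → ℝ) :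
    ∑ x : Fin N → Bool, Real.exp (∑ j : Fin N, a j * coord j x)
      ≤ 2 ^ N * Real.exp (1 / 2 * ∑ j, a j ^ 2) := by
  have h : ∀ x : Fin N → Bool, Real.exp (∑ j : Fin N, a j * coord j x)
      = ∏ j, Real.exp (a j * if x j then 1 else -1) := by
    intro x
    rw [Real.exp_sum]
    refine Finset.prod_congr rfl fun j _ => ?_
    simp [coord]
  simp_rw [h]
  have hswap := Finset.prod_univ_sum (fun _ : Fin N => (Finset.univ : Finset Bool))
    (fun j b => Real.exp (a j * if b then 1 else -1))
  rw [Fintype.piFinset_univ] at hswap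
  rw [← hswap, Finset.mul_sum, Real.exp_sum]
  calc ∏ j, ∑ b : Bool, Real.exp (a j * if b then 1 else -1)
      ≤ ∏ j : Fin N, (2 * Real.exp (1 / 2 * a j ^ 2)) := by
        refine Finset.prod_le_prod (fun j _ => Finset.sum_nonneg fun b _ => (Real.exp_pos _).le)
          fun j _ => ?_
        have := Real.cosh_le_exp_half_sq (a j)
        rw [Real.cosh_eq] at this
        simp only [Fintype.sum_bool, if_true, mul_one]
        rw [show 1 / 2 * a j ^ 2 = a j ^ 2 / 2 by ring]
        simp
        linarith
    _ = _ := by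
        rw [Finset.prod_mul_distrib]
        simp

lemma integral_exp_neg_sq_add_mul (t : ℝ) :
    ∫ g : ℝ, Real.exp (-g ^ 2 + t * g) = √Real.pi * Real.exp (t ^ 2 / 4) := by
  have h : ∀ g : ℝ, Real.exp (-g ^ 2 + t * g)
      = Real.exp (t ^ 2 / 4) * Real.exp (-1 * (g - t / 2) ^ 2) := by
    intro g
    rw [← Real.exp_add]
    congr 1
    ring
  simp_rw [h]
  rw [integral_const_mul, integral_sub_right_eq_self (fun g : ℝ => Real.exp (-1 * g ^ 2)),
    integral_gaussian]
  simp [mul_comm]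

lemma integrable_exp_neg_sq_add_mul (t : ℝ) :
    Integrable fun g : ℝ => Real.exp (-g ^ 2 + t * g) := by
  have h : (fun g : ℝ => Real.exp (-g ^ 2 + t * g))
      = fun g => Real.exp (t ^ 2 / 4) * Real.exp (-1 * (g - t / 2) ^ 2) := by
    funext g
    rw [← Real.exp_add]
    congr 1
    ring
  rw [h]
  exact ((integrable_exp_neg_mul_sq one_pos).comp_sub_right (t / 2)).const_mul _

/-- Exponential moment bound for a quadratic form of a uniformly random sign vector. -/
lemma sum_exp_quadratic_le {ι : Type*} [Fintype ι] (v : ι → Fin N → ℝ)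
    (hv : ∀ g : ι → ℝ, ∑ j, (∑ k, g k * v k j) ^ 2 ≤ ∑ k, g k ^ 2) :
    ∑ x : Fin N → Bool, Real.exp (1 / 4 * ∑ k, (∑ j : Fin N, v k j * coord j x) ^ 2)
      ≤ 2 ^ N * √2 ^ Fintype.card ι := by
  set t : ι → (Fin N → Bool) → ℝ := fun k x => ∑ j : Fin N, v k j * coord j x with ht
  have hpi : 0 < √Real.pi ^ Fintype.card ι := by positivity
  have hleft : ∀ x, ∫ g : ι → ℝ, ∏ k, Real.exp (-g k ^ 2 + t k x * g k)
      = √Real.pi ^ Fintype.card ι * Real.exp (1 / 4 * ∑ k, t k x ^ 2) := by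
    intro x
    rw [integral_fintype_prod_volume_eq_prod fun k (g : ℝ) => Real.exp (-g ^ 2 + t k x * g)]
    simp_rw [integral_exp_neg_sq_add_mul]
    rw [Finset.prod_mul_distrib, Finset.mul_sum, Real.exp_sum]
    congr 1
    · simp
    · exact Finset.prod_congr rfl fun k _ => by ring_nf
  have hint : ∀ x, Integrable fun g : ι → ℝ => ∏ k, Real.exp (-g k ^ 2 + t k x * g k) := fun x =>
    Integrable.fintype_prod fun k => integrable_exp_neg_sq_add_mul (t k x)
  have hint' : Integrable fun g : ι → ℝ => 2 ^ N * ∏ k, Real.exp (-(1 / 2) * g k ^ 2) :=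
    (Integrable.fintype_prod fun _ => integrable_exp_neg_mul_sq one_half_pos).const_mul _
  have hmain : ∑ x, √Real.pi ^ Fintype.card ι * Real.exp (1 / 4 * ∑ k, t k x ^ 2)
      ≤ 2 ^ N * √(2 * Real.pi) ^ Fintype.card ι := by
    simp_rw [← hleft]
    rw [← integral_finsetSum _ fun x _ => hint x]
    calc _ ≤ ∫ g : ι → ℝ, 2 ^ N * ∏ k, Real.exp (-(1 / 2) * g k ^ 2) := by
          refine integral_mono (integrable_finsetSum _ fun x _ => hint x) hint' fun g => ?_
          have hfac : ∀ x, ∏ k, Real.exp (-g k ^ 2 + t k x * g k)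
              = Real.exp (-∑ k, g k ^ 2)
                * Real.exp (∑ j : Fin N, (∑ k, g k * v k j) * coord j x) := by
            intro x
            rw [← Real.exp_sum, ← Real.exp_add, Finset.sum_add_distrib, Finset.sum_neg_distrib]
            congr 2
            simp_rw [ht, Finset.sum_mul]
            rw [Finset.sum_comm]
            exact Finset.sum_congr rfl fun _ _ => Finset.sum_congr rfl fun _ _ => by ring
          simp only [hfac]
          rw [← Finset.mul_sum, ← Real.exp_sum]
          refine (mul_le_mul_of_nonneg_left (sum_exp_coord_le _) (Real.exp_pos _).le).trans ?_
          rw [mul_left_comm, ← Real.exp_add, ← Finset.mul_sum]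
          gcongr
          linarith [hv g]
      _ = _ := by
          rw [integral_const_mul,
            integral_fintype_prod_volume_eq_pow fun g : ℝ => Real.exp (-(1 / 2) * g ^ 2),
            integral_gaussian]
          congr 4
          ring
  rw [← Finset.mul_sum, Real.sqrt_mul zero_le_two, mul_pow] at hmain
  refine le_of_mul_le_mul_left (hmain.trans_eq ?_) hpi
  ring

lemma card_quadratic_gt_le {ι : Type*} [Fintype ι] (v : ι → Fin N → ℝ)
    (hv : ∀ g : ι → ℝ, ∑ j, (∑ k, g k * v k j) ^ 2 ≤ ∑ k, g k ^ 2) (r : ℝ) :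
    ((Finset.univ.filter fun x : Fin N → Bool =>
        r < ∑ k, (∑ j : Fin N, v k j * coord j x) ^ 2).card : ℝ)
      ≤ 2 ^ N * √2 ^ Fintype.card ι * Real.exp (-(r / 4)) := by
  rw [Real.exp_neg, ← div_eq_mul_inv, le_div_iff₀ (Real.exp_pos _), ← nsmul_eq_mul,
    ← Finset.sum_const]
  refine (Finset.sum_le_sum fun x hx => ?_).trans <|
    (Finset.sum_le_univ_sum_of_nonneg fun x => (Real.exp_pos _).le).trans
      (sum_exp_quadratic_le v hv)
  have := (Finset.mem_filter.mp hx).2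
  rw [Real.exp_le_exp]
  linarith

lemma card_abs_gt_le {γ : Fin N → ℝ} (hγ : ∑ j, γ j ^ 2 ≤ 2) {r : ℝ} (hr : 0 ≤ r) :
    ((Finset.univ.filter fun x : Fin N → Bool => r < |∑ j : Fin N, γ j * coord j x|).card : ℝ)
      ≤ 2 ^ N * (√2 * Real.exp (-(r ^ 2 / 8))) := by
  have hs : √2 ^ 2 = 2 := Real.sq_sqrt zero_le_two
  have h := card_quadratic_gt_le (N := N) (fun (_ : Unit) j => γ j / √2) (fun g => ?_) (r ^ 2 / 2)
  · simp only [Finset.univ_unique, Finset.sum_singleton, Fintype.card_unit, pow_one] at h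
    rw [show r ^ 2 / 2 / 4 = r ^ 2 / 8 by ring, mul_assoc] at h
    refine le_trans ?_ h
    refine Nat.cast_le.mpr (Finset.card_le_card fun x hx => ?_)
    simp only [Finset.mem_filter, Finset.mem_univ, true_and] at hx ⊢
    simp_rw [div_mul_eq_mul_div, ← Finset.sum_div, div_pow, hs]
    have := pow_lt_pow_left₀ hx hr two_ne_zero
    rw [sq_abs] at this
    linarith
  · simp only [Finset.univ_unique, Finset.sum_singleton, mul_pow, div_pow, hs, ← Finset.mul_sum,
      ← Finset.sum_div]
    nlinarith [sq_nonneg (g default)]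

lemma exists_eigenbasis (H : Matrix (Fin N) (Fin N) ℝ) (hH : H.IsHermitian) :
    ∃ (b : Fin N → Fin N → ℝ) (g : Fin N → ℝ), (∀ k, H.mulVec (b k) = g k • b k) ∧
      (∀ k l, b k ⬝ᵥ b l = if k = l then 1 else 0) ∧
      ∀ x z, ∑ k, (b k ⬝ᵥ x) * (b k ⬝ᵥ z) = x ⬝ᵥ z := by
  have hinner : ∀ x z : EuclideanSpace ℝ (Fin N), inner ℝ x z = (x : Fin N → ℝ) ⬝ᵥ z := by
    intro x z
    simp [PiLp.inner_apply, dotProduct, mul_comm]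
  refine ⟨fun k => hH.eigenvectorBasis k, hH.eigenvalues, hH.mulVec_eigenvectorBasis, ?_, ?_⟩
  · intro k l
    rw [← hinner]
    exact orthonormal_iff_ite.mp hH.eigenvectorBasis.orthonormal k l
  · intro x z
    have := hH.eigenvectorBasis.sum_inner_mul_inner (WithLp.toLp 2 x) (WithLp.toLp 2 z)
    simp only [hinner] at this
    simpa [dotProduct_comm] using this

/-- A matrix close to the identity in Hilbert–Schmidt norm does not shrink most sign vectors. -/
lemma card_mulVec_lt_le (Γ : Matrix (Fin N) (Fin N) ℝ) {η : ℝ} (hη : 0 < η) (hη1 : η < 1)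
    (hΓ : ∑ i, ∑ j, ((Γ - 1) i j) ^ 2 ≤ η ^ 3 / 16 * N) :
    ((Finset.univ.filter fun x : Fin N → Bool =>
        ∑ i, (∑ j : Fin N, Γ i j * coord j x) ^ 2 < (1 - η) ^ 2 * N).card : ℝ)
      ≤ 2 ^ N * Real.exp (-(η * N / 8)) := by
  obtain ⟨b, g, hb, hon, hpars⟩ := exists_eigenbasis (Γ.transpose * Γ)
    (by simpa using Matrix.isHermitian_conjTranspose_mul_self Γ)
  have hquad : ∀ x, Γ.mulVec x ⬝ᵥ Γ.mulVec x = ∑ k, g k * (b k ⬝ᵥ x) ^ 2 := by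
    intro x
    have h1 : Γ.mulVec x ⬝ᵥ Γ.mulVec x = x ⬝ᵥ (Γ.transpose * Γ).mulVec x := by
      rw [← Matrix.mulVec_mulVec, Matrix.dotProduct_mulVec x, Matrix.vecMul_transpose]
    rw [h1, ← hpars]
    refine Finset.sum_congr rfl fun k _ => ?_
    have h2 : b k ⬝ᵥ (Γ.transpose * Γ).mulVec x = g k * (b k ⬝ᵥ x) := by
      rw [Matrix.dotProduct_mulVec, ← Matrix.mulVec_transpose, Matrix.transpose_mul,
        Matrix.transpose_transpose, hb, smul_dotProduct, smul_eq_mul]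
    rw [h2]
    ring
  have hg : ∀ k, g k = Γ.mulVec (b k) ⬝ᵥ Γ.mulVec (b k) := by
    intro k
    simp [hquad, hon]
  have hg0 : ∀ k, 0 ≤ g k := fun k => by
    rw [hg]
    exact Finset.sum_nonneg fun i _ => mul_self_nonneg _
  set S := Finset.univ.filter fun k => g k < 1 - η with hS
  have hcard : (S.card : ℝ) * (η ^ 2 / 4) ≤ η ^ 3 / 16 * N := by
    have hsum : ∑ k, (Γ - 1).mulVec (b k) ⬝ᵥ (Γ - 1).mulVec (b k)
        = ∑ i, ∑ j, ((Γ - 1) i j) ^ 2 := by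
      simp_rw [dotProduct.eq_1 (Matrix.mulVec _ _)]
      rw [Finset.sum_comm]
      refine Finset.sum_congr rfl fun i _ => ?_
      have := hpars ((Γ - 1) i) ((Γ - 1) i)
      simp_rw [dotProduct_comm (b _)] at this
      simp_rw [Matrix.mulVec]
      rw [this, dotProduct]
      exact Finset.sum_congr rfl fun j _ => by ring
    refine le_trans ?_ (hsum.le.trans hΓ)
    rw [← nsmul_eq_mul, ← Finset.sum_const]
    refine (Finset.sum_le_sum fun k hk => ?_).trans <|
      Finset.sum_le_univ_sum_of_nonneg fun k => Finset.sum_nonneg fun i _ => mul_self_nonneg _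
    have hk' : g k < 1 - η := (Finset.mem_filter.mp hk).2
    have hexp : (Γ - 1).mulVec (b k) ⬝ᵥ (Γ - 1).mulVec (b k)
        = g k - 2 * (Γ.mulVec (b k) ⬝ᵥ b k) + 1 := by
      rw [Matrix.sub_mulVec, Matrix.one_mulVec, sub_dotProduct, dotProduct_sub, dotProduct_sub,
        ← hg, hon, dotProduct_comm (b k)]
      simp only [if_true]
      ring
    have hcs : (Γ.mulVec (b k) ⬝ᵥ b k) ^ 2 ≤ g k := by
      have := Finset.sum_mul_sq_le_sq_mul_sq Finset.univ (Γ.mulVec (b k)) (b k)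
      have hbb := hon k k
      have hgg := hg k
      simp only [dotProduct, ← sq, if_true] at hbb hgg
      rw [hbb, ← hgg, mul_one] at this
      exact this
    have hlt : Γ.mulVec (b k) ⬝ᵥ b k ≤ √(g k) := Real.le_sqrt_of_sq_le hcs
    have hsq := Real.sq_sqrt (hg0 k)
    have hs0 := Real.sqrt_nonneg (g k)
    have hs1 : √(g k) ≤ 1 - η / 2 := by
      rw [Real.sqrt_le_left (by linarith)]
      nlinarith
    rw [hexp]
    nlinarith
  have hcard' : (S.card : ℝ) ≤ η * N / 4 := by
    have hη2 : 0 < η ^ 2 / 4 := by positivity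
    rw [← mul_le_mul_iff_left₀ hη2]
    linarith
  have hv : ∀ h : S → ℝ, ∑ j, (∑ k : S, h k * b k j) ^ 2 ≤ ∑ k, h k ^ 2 := by
    intro h
    have : ∀ j, (∑ k : S, h k * b k j) ^ 2
        = ∑ k : S, ∑ l : S, h k * h l * (b k j * b l j) := by
      intro j
      rw [sq, Finset.sum_mul_sum]
      exact Finset.sum_congr rfl fun _ _ => Finset.sum_congr rfl fun _ _ => by ring
    simp_rw [this]
    rw [Finset.sum_comm]
    refine (Finset.sum_congr rfl fun k _ => ?_).le
    rw [Finset.sum_comm]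
    have hdot : ∀ l : S, ∑ j, h k * h l * (b k j * b l j) = if k = l then h k * h l else 0 := by
      intro l
      rw [← Finset.mul_sum, ← dotProduct.eq_1, hon]
      simp
    simp [hdot, sq]
  refine le_trans ?_ ((card_quadratic_gt_le (fun k : S => b k) hv (η * N)).trans ?_)
  · refine Nat.cast_le.mpr (Finset.card_le_card fun x hx => ?_)
    simp only [Finset.mem_filter, Finset.mem_univ, true_and] at hx ⊢
    by_contra! hle
    set X : Fin N → ℝ := fun j => coord j x with hX
    have hXX : X ⬝ᵥ X = N := by
      simp [dotProduct, hX, ← sq, coord_sq]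
    have h1 : ∑ k, (b k ⬝ᵥ X) ^ 2 = N := by
      rw [← hXX, ← hpars]
      exact Finset.sum_congr rfl fun _ _ => sq _
    have h2 : ∑ k ∈ S, (b k ⬝ᵥ X) ^ 2 ≤ η * N := by
      rw [← Finset.sum_coe_sort]
      exact hle
    have h3 : ∑ i, (∑ j : Fin N, Γ i j * coord j x) ^ 2 = ∑ k, g k * (b k ⬝ᵥ X) ^ 2 := by
      rw [← hquad]
      exact Finset.sum_congr rfl fun _ _ => sq _
    have h4 : (1 - η) * (N - ∑ k ∈ S, (b k ⬝ᵥ X) ^ 2) ≤ ∑ k, g k * (b k ⬝ᵥ X) ^ 2 := by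
      rw [← h1, ← Finset.sum_filter_add_sum_filter_not Finset.univ (fun k => g k < 1 - η),
        add_sub_cancel_left, Finset.mul_sum,
        ← Finset.sum_filter_add_sum_filter_not Finset.univ (fun k => g k < 1 - η)
          (fun k => g k * (b k ⬝ᵥ X) ^ 2)]
      refine le_add_of_nonneg_of_le
        (Finset.sum_nonneg fun k _ => mul_nonneg (hg0 k) (sq_nonneg _))
        (Finset.sum_le_sum fun k hk => ?_)
      exact mul_le_mul_of_nonneg_right (not_lt.mp (Finset.mem_filter.mp hk).2) (sq_nonneg _)
    rw [h3] at hx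
    nlinarith
  · rw [mul_assoc]
    gcongr
    have h2 : √2 ≤ Real.exp (1 / 2) := by
      rw [Real.sqrt_le_left (Real.exp_pos _).le, ← Real.exp_nat_mul]
      have := Real.add_one_le_exp (1 : ℝ)
      norm_num
      linarith
    calc √2 ^ Fintype.card S * Real.exp (-(η * N / 4))
        ≤ Real.exp (1 / 2) ^ S.card * Real.exp (-(η * N / 4)) := by
          rw [Fintype.card_coe]
          gcongr
      _ ≤ _ := by
          rw [← Real.exp_nat_mul, ← Real.exp_add, Real.exp_le_exp]
          linarith

end Concentration

section Drift

variable {N : ℕ} (B : Finset (Fin N → Bool))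

/-- Regression coefficient of the inner product with `x` on the `k`-th coordinate. -/
noncomputable def rowCoef (x : Fin N → Bool) (k : ℕ) (y : Fin N → Bool) : ℝ :=
  regCoef B k (fun z => ∑ j ∈ Finset.range N, coord j x * coord j z) y

/-- The coordinate `k` is nearly unbiased and nearly uncorrelated with the others, given the
preceding ones. -/
def RegularAt (k : ℕ) (y : Fin N → Bool) : Prop := bias B k y ^ 2 ≤ 1 / 2 ∧ offSq B k y ≤ 1

open Classical in
/-- The coefficient `rowCoef`, set to zero when it is large or the coordinate is not balanced. -/
noncomputable def clipCoef (ℓ : ℝ) (x : Fin N → Bool) (k : ℕ) (y : Fin N → Bool) : ℝ :=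
  if RegularAt B k y ∧ |rowCoef B x k y| ≤ ℓ then rowCoef B x k y else 0

/-- The clipped coefficients, stopped once their energy exceeds `N`. -/
noncomputable def drift (ℓ : ℝ) (x : Fin N → Bool) (k : ℕ) (y : Fin N → Bool) : ℝ :=
  if energy B (clipCoef B ℓ x) k y ≤ N then clipCoef B ℓ x k y else 0

lemma rowCoef_eq (x : Fin N → Bool) (k : ℕ) (y : Fin N → Bool) :
    rowCoef B x k y = ∑ j : Fin N, regCoef B k (coord j) y * coord j x := by
  unfold rowCoef
  rw [regCoef_sum, Finset.sum_range]
  exact Finset.sum_congr rfl fun _ _ => mul_comm _ _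

lemma prefixMeas_clipCoef (ℓ : ℝ) (x : Fin N → Bool) (k : ℕ) :
    PrefixMeas k (clipCoef B ℓ x k) := by
  intro y z h
  unfold clipCoef RegularAt
  rw [prefixMeas_bias B k y z h, prefixMeas_offSq B k y z h,
    show rowCoef B x k y = rowCoef B x k z from prefixMeas_regCoef B k _ y z h]

lemma energy_succ (u : ℕ → (Fin N → Bool) → ℝ) (n : ℕ) (y : Fin N → Bool) :
    energy B u (n + 1) y = energy B u n y + (1 - bias B n y ^ 2) * u n y ^ 2 :=
  Finset.sum_range_succ _ _

lemma prefixMeas_energy {u : ℕ → (Fin N → Bool) → ℝ} (hu : ∀ k, PrefixMeas k (u k)) (n : ℕ) :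
    PrefixMeas n (energy B u n) := by
  intro y z h
  refine Finset.sum_congr rfl fun k hk => ?_
  have hkn := (Finset.mem_range.mp hk).le
  rw [(prefixMeas_bias B k).mono hkn y z h, (hu k).mono hkn y z h]

lemma prefixMeas_drift (ℓ : ℝ) (x : Fin N → Bool) (k : ℕ) : PrefixMeas k (drift B ℓ x k) := by
  intro y z h
  unfold drift
  rw [prefixMeas_energy B (prefixMeas_clipCoef B ℓ x) k y z h, prefixMeas_clipCoef B ℓ x k y z h]

variable {ℓ : ℝ} (x : Fin N → Bool)

lemma abs_clipCoef_le (hℓ : 0 ≤ ℓ) (k : ℕ) (y : Fin N → Bool) : |clipCoef B ℓ x k y| ≤ ℓ := by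
  unfold clipCoef
  split_ifs with h
  · exact h.2
  · simpa using hℓ

lemma abs_drift_le (hℓ : 0 ≤ ℓ) (k : ℕ) (y : Fin N → Bool) : |drift B ℓ x k y| ≤ ℓ := by
  unfold drift
  split_ifs
  · exact abs_clipCoef_le B x hℓ k y
  · simpa using hℓ

lemma drift_mul_rowCoef (ℓ : ℝ) (k : ℕ) (y : Fin N → Bool) :
    drift B ℓ x k y * rowCoef B x k y = drift B ℓ x k y ^ 2 := by
  unfold drift clipCoef
  split_ifs <;> ring

lemma abs_tiltStep_drift_le (hℓ : 0 ≤ ℓ) (a : ℝ) (k : ℕ) (y : Fin N → Bool) :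
    |tiltStep B a (drift B ℓ x) k y| ≤ |a| * ℓ * 2 := by
  unfold tiltStep
  rw [abs_mul, abs_mul]
  have h1 := abs_drift_le B x hℓ k y
  have h2 : |coord k y - bias B k y| ≤ 2 := by
    have := abs_sub (coord k y) (bias B k y)
    have := abs_bias_le B k y
    have := abs_coord k y
    linarith
  gcongr

lemma energy_drift_le (hℓ : 0 ≤ ℓ) (n : ℕ) (y : Fin N → Bool) :
    energy B (drift B ℓ x) n y ≤ N + ℓ ^ 2 ∧
      energy B (drift B ℓ x) n y ≤ energy B (clipCoef B ℓ x) n y := by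
  induction n with
  | zero => simp only [energy, Finset.range_zero, Finset.sum_empty]; exact ⟨by positivity, le_rfl⟩
  | succ n ih =>
    have hb := bias_sq_le B n y
    have hb0 := sq_nonneg (bias B n y)
    have hc : clipCoef B ℓ x n y ^ 2 ≤ ℓ ^ 2 := sq_le_sq.mpr (by
      rw [abs_of_nonneg hℓ]; exact abs_clipCoef_le B x hℓ n y)
    have hc0 := sq_nonneg (clipCoef B ℓ x n y)
    rw [energy_succ, energy_succ]
    by_cases h : energy B (clipCoef B ℓ x) n y ≤ N
    · rw [show drift B ℓ x n y = clipCoef B ℓ x n y from if_pos h]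
      constructor
      · nlinarith
      · linarith
    · rw [show drift B ℓ x n y = 0 from if_neg h]
      constructor
      · simpa using ih.1
      · nlinarith

lemma min_energy_le (n : ℕ) (y : Fin N → Bool) :
    min (energy B (clipCoef B ℓ x) n y) N ≤ energy B (drift B ℓ x) n y := by
  induction n with
  | zero => simp [energy]
  | succ n ih =>
    rw [energy_succ, energy_succ]
    by_cases h : energy B (clipCoef B ℓ x) n y ≤ N
    · rw [show drift B ℓ x n y = clipCoef B ℓ x n y from if_pos h]
      rw [min_eq_left h] at ih
      exact (min_le_left _ _).trans (by linarith)
    · rw [show drift B ℓ x n y = 0 from if_neg h]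
      rw [min_eq_right (not_le.mp h).le] at ih
      exact (min_le_right _ _).trans (by linarith)

open Classical in
/-- The matrix whose action on the sign vector `x` has squared norm the unclipped energy. -/
noncomputable def rowMatrix (y : Fin N → Bool) : Matrix (Fin N) (Fin N) ℝ := fun k j =>
  if RegularAt B k y then √(1 - bias B k y ^ 2) * regCoef B k (coord j) y else 0

/-- Total deviation of the conditional laws along `y` from those of independent fair signs. -/
noncomputable def deviation (y : Fin N → Bool) : ℝ :=
  ∑ k ∈ Finset.range N, (bias B k y ^ 2 + (1 - bias B k y ^ 2) * offSq B k y)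

lemma sum_rowMatrix_sub_one_sq_le {y : Fin N → Bool} (hy : y ∈ B) :
    ∑ i, ∑ j, ((rowMatrix B y - 1) i j) ^ 2 ≤ 2 * deviation B y := by
  unfold deviation
  rw [Finset.sum_range, Finset.mul_sum]
  refine Finset.sum_le_sum fun k _ => ?_
  have hb := bias_sq_le B k y
  have hb0 := sq_nonneg (bias B k y)
  have ho := offSq_nonneg B k y
  have hprod : 0 ≤ (1 - bias B k y ^ 2) * offSq B k y := mul_nonneg (by linarith) ho
  by_cases hk : RegularAt B k y
  · have hoff : ∑ j ∈ Finset.univ.erase k, ((rowMatrix B y - 1) k j) ^ 2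
        = (1 - bias B k y ^ 2) * offSq B k y := by
      have h1 : offSq B k y = ∑ j ∈ Finset.univ.erase k, regCoef B k (coord (j : ℕ)) y ^ 2 := by
        have h2 := Finset.add_sum_erase Finset.univ
          (fun j : Fin N => regCoef B k (coord (j : ℕ)) y ^ 2) (Finset.mem_univ k)
        have h3 := Finset.add_sum_erase (Finset.range N)
          (fun j : ℕ => regCoef B k (coord j) y ^ 2) (Finset.mem_range.mpr k.isLt)
        rw [Finset.sum_range] at h3
        unfold offSq
        linarith
      rw [h1, Finset.mul_sum]
      refine Finset.sum_congr rfl fun j hj => ?_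
      rw [Matrix.sub_apply, Matrix.one_apply_ne (Finset.ne_of_mem_erase hj).symm, rowMatrix,
        if_pos hk, sub_zero, mul_pow, Real.sq_sqrt (by linarith)]
    have hdiag : ((rowMatrix B y - 1) k k) ^ 2 ≤ bias B k y ^ 2 := by
      rw [Matrix.sub_apply, Matrix.one_apply_eq, rowMatrix, if_pos hk,
        regCoef_self B hy (by linarith [hk.1]), mul_one]
      have hs := Real.sq_sqrt (show 0 ≤ 1 - bias B k y ^ 2 by linarith)
      have hs0 := Real.sqrt_nonneg (1 - bias B k y ^ 2)
      have hs1 : √(1 - bias B k y ^ 2) ≤ 1 := Real.sqrt_le_one.mpr (by linarith)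
      nlinarith
    rw [← Finset.add_sum_erase _ _ (Finset.mem_univ k), hoff]
    linarith
  · have hrow : ∑ j, ((rowMatrix B y - 1) k j) ^ 2 = 1 := by
      simp [rowMatrix, hk, Matrix.one_apply]
    rw [hrow]
    by_cases h : bias B k y ^ 2 ≤ 1 / 2
    · have h' : 1 < offSq B k y := not_le.mp fun h' => hk ⟨h, h'⟩
      nlinarith
    · linarith

lemma sum_deviation_le :
    ∑ y ∈ B, deviation B y ≤ 8 * (B.card * Real.log (2 ^ N / B.card)) := by
  have h1 := sum_bias_sq_le B
  have h2 := sum_offSq_le B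
  have h3 : ∑ y ∈ B, deviation B y = ∑ k ∈ Finset.range N, ∑ y ∈ B, bias B k y ^ 2
      + ∑ k ∈ Finset.range N, ∑ y ∈ B, (1 - bias B k y ^ 2) * offSq B k y := by
    unfold deviation
    rw [Finset.sum_comm]
    simp_rw [Finset.sum_add_distrib]
  linarith

/-- When `y` is regular, the energy of the drift is nearly full for most sign vectors. -/
lemma card_energy_lt_le {y : Fin N → Bool} (hy : y ∈ B) {η : ℝ} (hη : 0 < η) (hη1 : η < 1)
    (hdev : 2 * deviation B y ≤ η ^ 3 / 16 * N) (hℓ : 0 ≤ ℓ) :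
    ((Finset.univ.filter fun x : Fin N → Bool =>
        energy B (drift B ℓ x) N y < (1 - η) ^ 2 * N).card : ℝ)
      ≤ 2 ^ N * (N * (√2 * Real.exp (-(ℓ ^ 2 / 8))) + Real.exp (-(η * N / 8))) := by
  classical
  set E := Finset.univ.filter fun x : Fin N → Bool =>
    ∑ i, (∑ j : Fin N, rowMatrix B y i j * coord j x) ^ 2 < (1 - η) ^ 2 * N with hE
  set F : Fin N → Finset (Fin N → Bool) := fun k => Finset.univ.filter fun x : Fin N → Bool =>
    RegularAt B k y ∧ ℓ < |rowCoef B x k y| with hF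
  have hEcard : (E.card : ℝ) ≤ 2 ^ N * Real.exp (-(η * N / 8)) :=
    card_mulVec_lt_le (rowMatrix B y) hη hη1 ((sum_rowMatrix_sub_one_sq_le B hy).trans hdev)
  have hFcard : ∀ k, ((F k).card : ℝ) ≤ 2 ^ N * (√2 * Real.exp (-(ℓ ^ 2 / 8))) := by
    intro k
    by_cases hk : RegularAt B k y
    · have hγ : ∑ j : Fin N, regCoef B k (coord (j : ℕ)) y ^ 2 ≤ 2 := by
        have h3 := Finset.add_sum_erase (Finset.range N)
          (fun j : ℕ => regCoef B k (coord j) y ^ 2) (Finset.mem_range.mpr k.isLt)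
        rw [Finset.sum_range, regCoef_self B hy (by linarith [hk.1])] at h3
        have h4 := hk.2
        unfold offSq at h4
        linarith
      have := card_abs_gt_le hγ hℓ
      simpa only [hF, hk, true_and, rowCoef_eq] using this
    · simp only [hF, hk, false_and, Finset.filter_false, Finset.card_empty, Nat.cast_zero]
      positivity
  have hsub : (Finset.univ.filter fun x : Fin N → Bool =>
      energy B (drift B ℓ x) N y < (1 - η) ^ 2 * N) ⊆ Finset.univ.biUnion F ∪ E := by
    intro x hx
    by_contra hnot
    simp only [Finset.mem_union, Finset.mem_biUnion, hF, hE, Finset.mem_filter, Finset.mem_univ,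
      true_and, not_or, not_exists, not_and, not_lt] at hx hnot
    have henergy : energy B (clipCoef B ℓ x) N y
        = ∑ i, (∑ j : Fin N, rowMatrix B y i j * coord j x) ^ 2 := by
      unfold energy
      rw [Finset.sum_range]
      refine Finset.sum_congr rfl fun k _ => ?_
      have hb := bias_sq_le B k y
      by_cases hk : RegularAt B k y
      · have hr : clipCoef B ℓ x k y = rowCoef B x k y := if_pos ⟨hk, hnot.1 k hk⟩
        simp_rw [rowMatrix, if_pos hk, mul_assoc, ← Finset.mul_sum]
        rw [hr, rowCoef_eq, mul_pow, Real.sq_sqrt (by linarith)]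
      · have hr : clipCoef B ℓ x k y = 0 := if_neg fun h => hk h.1
        simp [rowMatrix, hk, hr]
    have hmin := min_energy_le B (ℓ := ℓ) x N y
    have hle : (1 - η) ^ 2 * N ≤ min (energy B (clipCoef B ℓ x) N y) N := by
      rw [henergy]
      refine le_min hnot.2 ?_
      exact mul_le_of_le_one_left (Nat.cast_nonneg N) (by nlinarith)
    linarith
  have hcard : ((Finset.univ.filter fun x : Fin N → Bool =>
      energy B (drift B ℓ x) N y < (1 - η) ^ 2 * N).card : ℝ)
      ≤ ∑ k, ((F k).card : ℝ) + E.card := by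
    exact_mod_cast (Finset.card_le_card hsub).trans ((Finset.card_union_le _ _).trans
      (Nat.add_le_add_right Finset.card_biUnion_le _))
  refine hcard.trans ?_
  have hsum : ∑ k, ((F k).card : ℝ) ≤ N * (2 ^ N * (√2 * Real.exp (-(ℓ ^ 2 / 8)))) := by
    refine (Finset.sum_le_sum fun k _ => hFcard k).trans_eq ?_
    simp
  linarith

end Drift

section Comparison

variable {N : ℕ}

/-- Gibbs' variational inequality for the exponential sum of `f`, with trial density `w`. -/
lemma card_mul_exp_le_sum_exp {ι : Type*} {s : Finset ι} {w f : ι → ℝ} (hw : ∀ i ∈ s, 0 < w i)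
    (hsum : ∑ i ∈ s, w i = s.card) {t : ℝ}
    (ht : s.card * t ≤ ∑ i ∈ s, w i * (f i - Real.log (w i))) :
    s.card * Real.exp t ≤ ∑ i ∈ s, Real.exp (f i) := by
  have h : ∀ i ∈ s, Real.exp t * (w i * (f i - Real.log (w i)) + (1 - t) * w i)
      ≤ Real.exp (f i) := by
    intro i hi
    have h1 : Real.exp (f i) = w i * (Real.exp t * Real.exp (f i - Real.log (w i) - t)) := by
      rw [← Real.exp_add, add_sub_cancel, Real.exp_sub, Real.exp_log (hw i hi),
        mul_div_cancel₀ _ (hw i hi).ne']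
    have h2 := Real.add_one_le_exp (f i - Real.log (w i) - t)
    rw [h1]
    calc _ = w i * (Real.exp t * (f i - Real.log (w i) - t + 1)) := by ring
      _ ≤ _ := by
        have := hw i hi
        gcongr
  refine le_trans ?_ (Finset.sum_le_sum h)
  rw [← Finset.mul_sum, Finset.sum_add_distrib, ← Finset.mul_sum, hsum, mul_comm]
  gcongr
  linarith

/-- Inner product of two points of the cube, viewed as sign vectors. -/
noncomputable def signInner (x y : Fin N → Bool) : ℝ :=
  ∑ j ∈ Finset.range N, coord j x * coord j y

lemma xiMass_eq_prod (a : ℝ) (x y : Fin N → Bool) :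
    xiMass N a x y = (1 / 4) ^ N * ∏ j ∈ Finset.range N, (1 + a * (coord j x * coord j y)) := by
  have hfac : ∀ j : Fin N, 1 + a * (coord j x * coord j y)
      = if x j = y j then 1 + a else 1 - a := by
    intro j
    simp only [coord, j.isLt, dif_pos, Fin.eta]
    cases x j <;> cases y j <;> simp <;> ring
  have hcard : (Finset.univ.filter fun i => ¬ x i = y i).card = N - agree x y := by
    have := Finset.card_filter_add_card_filter_not (s := Finset.univ) fun i => x i = y i
    simp only [Finset.card_univ, Fintype.card_fin] at this
    unfold agree
    omega
  have hle : agree x y ≤ N := by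
    have := Finset.card_filter_le Finset.univ fun i => x i = y i
    simpa [agree] using this
  rw [Finset.prod_range]
  simp_rw [hfac]
  rw [Finset.prod_ite, Finset.prod_const, Finset.prod_const, hcard, xiMass, div_pow (1 + a), div_pow (1 - a)]
  change _ = _ * ((1 + a) ^ agree x y * _)
  have h4 : (1 / 4 : ℝ) ^ N = (1 / 2) ^ N * ((2 ^ agree x y)⁻¹ * (2 ^ (N - agree x y))⁻¹) := by
    rw [← mul_inv, ← pow_add, Nat.add_sub_cancel' hle, ← inv_pow, ← mul_pow]
    norm_num
  rw [h4]
  ring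

lemma exp_signInner_le_xiMass {a : ℝ} (ha : |a| ≤ 1 / 2) (x y : Fin N → Bool) :
    (1 / 4) ^ N * Real.exp (a * signInner x y - (a ^ 2 / 2 + 2 * |a| ^ 3) * N)
      ≤ xiMass N a x y := by
  rw [xiMass_eq_prod]
  gcongr
  have habs : ∀ j, |a * (coord j x * coord j y)| = |a| := fun j => by
    rw [abs_mul, abs_mul, abs_coord, abs_coord, mul_one, mul_one]
  have hpos : ∀ j, 0 < 1 + a * (coord j x * coord j y) := fun j => by
    have := neg_abs_le (a * (coord j x * coord j y))
    rw [habs] at this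
    linarith
  rw [← Real.exp_log (Finset.prod_pos fun j _ => hpos j), Real.exp_le_exp,
    Real.log_prod fun j _ => (hpos j).ne']
  calc a * signInner x y - (a ^ 2 / 2 + 2 * |a| ^ 3) * N
      = ∑ j ∈ Finset.range N, (a * (coord j x * coord j y) - (a ^ 2 / 2 + 2 * |a| ^ 3)) := by
        rw [Finset.sum_sub_distrib, ← Finset.mul_sum]
        simp only [signInner, Finset.sum_const, Finset.card_range, nsmul_eq_mul]
        ring
    _ ≤ _ := by
        refine Finset.sum_le_sum fun j _ => ?_
        have h := abs_log_one_add_sub_le ((habs j).trans_le ha)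
        rw [habs] at h
        have hsq : (a * (coord j x * coord j y)) ^ 2 = a ^ 2 := by
          rw [mul_pow, mul_pow, coord_sq, coord_sq, mul_one, mul_one]
        rw [hsq] at h
        linarith [(abs_le.mp h).1]

variable (B : Finset (Fin N → Bool)) {ℓ ρ a η K : ℝ}

lemma tilt_drift_pos (x : Fin N → Bool) (hℓ : 0 ≤ ℓ) (ha : |a| * ℓ * 2 ≤ ρ) (hρ : ρ ≤ 1 / 2)
    (n : ℕ) (y : Fin N → Bool) : 0 < tilt B a (drift B ℓ x) n y := by
  refine Finset.prod_pos fun k _ => ?_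
  have h1 := abs_tiltStep_drift_le B x hℓ a k y
  have h2 := neg_abs_le (tiltStep B a (drift B ℓ x) k y)
  linarith

lemma sum_tilt_mul_sub_log_ge (x : Fin N → Bool) (hℓ : 0 ≤ ℓ) (ha : |a| * ℓ * 2 ≤ ρ)
    (hρ : ρ ≤ 1 / 2) :
    a * ∑ y ∈ B, signInner x y + (1 / 2 - 4 * ρ) * a ^ 2 *
        ∑ y ∈ B, tilt B a (drift B ℓ x) N y * energy B (drift B ℓ x) N y
      ≤ ∑ y ∈ B, tilt B a (drift B ℓ x) N y *
        (a * signInner x y - Real.log (tilt B a (drift B ℓ x) N y)) := by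
  have h1 := sum_tilt_mul B a (prefixMeas_drift B ℓ x) (signInner x) N
  have h2 := sum_tilt_mul_log_le B a (prefixMeas_drift B ℓ x) hρ
    (fun k y => (abs_tiltStep_drift_le B x hℓ a k y).trans ha) N
  have h3 : ∀ y, ∑ k ∈ Finset.range N, (1 - bias B k y ^ 2) *
      (drift B ℓ x k y * regCoef B k (signInner x) y) = energy B (drift B ℓ x) N y := by
    intro y
    refine Finset.sum_congr rfl fun k _ => ?_
    rw [← drift_mul_rowCoef]
    rfl
  simp_rw [h3] at h1
  have h4 : ∑ y ∈ B, tilt B a (drift B ℓ x) N y *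
        (a * signInner x y - Real.log (tilt B a (drift B ℓ x) N y))
      = a * ∑ y ∈ B, tilt B a (drift B ℓ x) N y * signInner x y
        - ∑ y ∈ B, tilt B a (drift B ℓ x) N y * Real.log (tilt B a (drift B ℓ x) N y) := by
    rw [Finset.mul_sum, ← Finset.sum_sub_distrib]
    exact Finset.sum_congr rfl fun y _ => by ring
  rw [h4, h1]
  linarith

/-- The points of `B` at which the energy of the drift towards `x` is deficient. -/
noncomputable def lowEnergy (ℓ η : ℝ) (x : Fin N → Bool) : Finset (Fin N → Bool) :=
  B.filter fun y => energy B (drift B ℓ x) N y < (1 - η) ^ 2 * N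

lemma sum_tilt_mul_energy_ge (x : Fin N → Bool) (hℓ : 0 ≤ ℓ) (ha : |a| * ℓ * 2 ≤ ρ)
    (hρ : ρ ≤ 1 / 2) (hη : 0 < η) (hK : Real.exp (a ^ 2 * (N + ℓ ^ 2)) ≤ K) :
    (1 - η) ^ 2 * N * (B.card - (η * B.card + K / η * (lowEnergy B ℓ η x).card) / 2)
      ≤ ∑ y ∈ B, tilt B a (drift B ℓ x) N y * energy B (drift B ℓ x) N y := by
  have hK0 : 0 < K := (Real.exp_pos _).trans_le hK
  set w := tilt B a (drift B ℓ x) N with hw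
  have hw0 : ∀ y, 0 < w y := tilt_drift_pos B x hℓ ha hρ N
  have hsq : ∑ y ∈ B, w y ^ 2 ≤ K * B.card := by
    have h := sum_tilt_sq_mul_exp_le B a (prefixMeas_drift B ℓ x) N
    refine le_trans ?_ (mul_le_mul_of_nonneg_left h hK0.le)
    rw [Finset.mul_sum]
    refine Finset.sum_le_sum fun y _ => ?_
    have h1 : 1 ≤ K * Real.exp (-(a ^ 2 * energy B (drift B ℓ x) N y)) := by
      rw [Real.exp_neg, ← div_eq_mul_inv, one_le_div (Real.exp_pos _)]
      refine le_trans (Real.exp_le_exp.mpr ?_) hK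
      exact mul_le_mul_of_nonneg_left (energy_drift_le B x hℓ N y).1 (sq_nonneg a)
    calc w y ^ 2 = w y ^ 2 * 1 := (mul_one _).symm
      _ ≤ w y ^ 2 * (K * Real.exp (-(a ^ 2 * energy B (drift B ℓ x) N y))) := by gcongr
      _ = _ := by ring
  have hlow : ∑ y ∈ lowEnergy B ℓ η x, w y
      ≤ (η * B.card + K / η * (lowEnergy B ℓ η x).card) / 2 := by
    have hpt : ∀ y ∈ lowEnergy B ℓ η x, w y ≤ η / K * w y ^ 2 / 2 + K / η / 2 := by
      intro y _
      have h := sq_nonneg (η / K * w y - 1)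
      have hKη : 0 < K / η := by positivity
      have h2 : K / η * (η / K * w y - 1) ^ 2 = η / K * w y ^ 2 - 2 * w y + K / η := by
        field_simp
        ring
      nlinarith [mul_nonneg hKη.le h]
    refine (Finset.sum_le_sum hpt).trans ?_
    rw [Finset.sum_add_distrib, ← Finset.sum_div, ← Finset.mul_sum, Finset.sum_const,
      nsmul_eq_mul]
    have hsub : ∑ y ∈ lowEnergy B ℓ η x, w y ^ 2 ≤ K * B.card :=
      (Finset.sum_le_sum_of_subset_of_nonneg (Finset.filter_subset _ _)
        fun y _ _ => sq_nonneg (w y)).trans hsq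
    have h3 : η / K * ∑ y ∈ lowEnergy B ℓ η x, w y ^ 2 ≤ η * B.card := by
      calc _ ≤ η / K * (K * B.card) := by gcongr
        _ = _ := by field_simp
    linarith
  have hsum : ∑ y ∈ B, w y = B.card := sum_tilt B a (prefixMeas_drift B ℓ x) N
  have hsplit := Finset.sum_filter_add_sum_filter_not B
    (fun y => energy B (drift B ℓ x) N y < (1 - η) ^ 2 * N) w
  have henergy : ∀ y, 0 ≤ energy B (drift B ℓ x) N y := fun y =>
    Finset.sum_nonneg fun k _ => mul_nonneg (by linarith [bias_sq_le B k y]) (sq_nonneg _)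
  rw [← Finset.sum_filter_add_sum_filter_not B
    (fun y => energy B (drift B ℓ x) N y < (1 - η) ^ 2 * N)
    (fun y => w y * energy B (drift B ℓ x) N y)]
  refine le_add_of_nonneg_of_le
    (Finset.sum_nonneg fun y _ => mul_nonneg (hw0 y).le (henergy y)) ?_
  have hge : (1 - η) ^ 2 * N * ∑ y ∈ B.filter
        (fun y => ¬ energy B (drift B ℓ x) N y < (1 - η) ^ 2 * N), w y
      ≤ ∑ y ∈ B.filter (fun y => ¬ energy B (drift B ℓ x) N y < (1 - η) ^ 2 * N),
        w y * energy B (drift B ℓ x) N y := by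
    rw [Finset.mul_sum]
    refine Finset.sum_le_sum fun y hy => ?_
    rw [mul_comm]
    exact mul_le_mul_of_nonneg_left (not_lt.mp (Finset.mem_filter.mp hy).2) (hw0 y).le
  refine le_trans ?_ hge
  gcongr
  unfold lowEnergy at hlow ⊢
  linarith

/-- Lower bound for an exponential sum of inner products over a rectangle. -/
lemma card_mul_exp_le_sum_exp_signInner (A : Finset (Fin N → Bool)) {m : ℝ}
    (hm : A.card * B.card * m = ∑ x ∈ A, ∑ y ∈ B, signInner x y)
    (hℓ : 0 ≤ ℓ) (ha : |a| * ℓ * 2 ≤ ρ) (hρ : ρ ≤ 1 / 8) (hη : 0 < η)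
    (hK : Real.exp (a ^ 2 * (N + ℓ ^ 2)) ≤ K)
    (hbad : ∑ x ∈ A, ((lowEnergy B ℓ η x).card : ℝ) ≤ η ^ 2 / K * (A.card * B.card)) :
    A.card * B.card * Real.exp (a * m + (1 / 2 - 4 * ρ) * a ^ 2 * ((1 - η) ^ 2 * N * (1 - η)))
      ≤ ∑ x ∈ A, ∑ y ∈ B, Real.exp (a * signInner x y) := by
  have hK0 : 0 < K := (Real.exp_pos _).trans_le hK
  have hρ' : ρ ≤ 1 / 2 := by linarith
  set w : (Fin N → Bool) × (Fin N → Bool) → ℝ := fun z => tilt B a (drift B ℓ z.1) N z.2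
  have hw0 : ∀ z ∈ A ×ˢ B, 0 < w z := fun z _ => tilt_drift_pos B z.1 hℓ ha hρ' N z.2
  have hsum : ∑ z ∈ A ×ˢ B, w z = (A ×ˢ B).card := by
    rw [Finset.sum_product, Finset.card_product, Nat.cast_mul, ← nsmul_eq_mul, ← Finset.sum_const]
    exact Finset.sum_congr rfl fun x _ => sum_tilt B a (prefixMeas_drift B ℓ x) N
  have hprod := Finset.sum_product (s := A) (t := B) fun z => Real.exp (a * signInner z.1 z.2)
  rw [← hprod, ← Nat.cast_mul, ← Finset.card_product]
  refine card_mul_exp_le_sum_exp hw0 hsum ?_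
  rw [Finset.sum_product, Finset.card_product, Nat.cast_mul]
  refine le_trans ?_ (Finset.sum_le_sum fun x _ => sum_tilt_mul_sub_log_ge B x hℓ ha hρ')
  rw [Finset.sum_add_distrib, ← Finset.mul_sum, ← Finset.mul_sum, ← hm, mul_add]
  have hE := Finset.sum_le_sum fun x (_ : x ∈ A) =>
    sum_tilt_mul_energy_ge B x hℓ ha hρ' hη hK
  rw [← Finset.mul_sum, Finset.sum_sub_distrib, ← Finset.sum_div, Finset.sum_add_distrib,
    ← Finset.mul_sum, ← Finset.mul_sum, Finset.sum_const, nsmul_eq_mul] at hE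
  have hKη : K / η * ∑ x ∈ A, ((lowEnergy B ℓ η x).card : ℝ) ≤ η * (A.card * B.card) := by
    calc _ ≤ K / η * (η ^ 2 / K * (A.card * B.card)) := by gcongr
      _ = _ := by field_simp
  have hE' : (1 - η) ^ 2 * N * (A.card * B.card * (1 - η))
      ≤ ∑ x ∈ A, ∑ y ∈ B, tilt B a (drift B ℓ x) N y * energy B (drift B ℓ x) N y := by
    refine le_trans ?_ hE
    gcongr
    linarith
  have hcoef : 0 ≤ (1 / 2 - 4 * ρ) * a ^ 2 := mul_nonneg (by linarith) (sq_nonneg a)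
  have := mul_le_mul_of_nonneg_left hE' hcoef
  linarith

lemma sum_card_lowEnergy_le (A : Finset (Fin N → Bool)) (hη : 0 < η) (hη1 : η < 1)
    (hN : 0 < N) (hℓ : 0 ≤ ℓ) {h : ℝ} (hh : Real.log (2 ^ N / B.card) ≤ h * N) :
    ∑ x ∈ A, ((lowEnergy B ℓ η x).card : ℝ)
      ≤ A.card * B.card * (256 * h / η ^ 3)
        + B.card * (2 ^ N * (N * (√2 * Real.exp (-(ℓ ^ 2 / 8))) + Real.exp (-(η * N / 8)))) := by
  classical
  set r := 2 ^ N * (N * (√2 * Real.exp (-(ℓ ^ 2 / 8))) + Real.exp (-(η * N / 8))) with hr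
  have hr0 : 0 ≤ r := by positivity
  have hNpos : (0 : ℝ) < N := Nat.cast_pos.mpr hN
  set C := B.filter fun y => η ^ 3 / 16 * N < 2 * deviation B y with hC
  have hdev0 : ∀ y, 0 ≤ deviation B y := fun y => Finset.sum_nonneg fun k _ =>
    add_nonneg (sq_nonneg _) (mul_nonneg (by linarith [bias_sq_le B k y]) (offSq_nonneg B k y))
  have hCcard : (C.card : ℝ) ≤ B.card * (256 * h / η ^ 3) := by
    have h1 : C.card * (η ^ 3 / 16 * N) ≤ 2 * ∑ y ∈ B, deviation B y := by
      rw [← nsmul_eq_mul, ← Finset.sum_const, Finset.mul_sum]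
      refine (Finset.sum_le_sum fun y hy => (Finset.mem_filter.mp hy).2.le).trans ?_
      exact Finset.sum_le_sum_of_subset_of_nonneg (Finset.filter_subset _ _)
        fun y _ _ => by linarith [hdev0 y]
    have h2 := sum_deviation_le B
    have h3 : (B.card : ℝ) * Real.log (2 ^ N / B.card) ≤ B.card * (h * N) := by gcongr
    have h4 : (0 : ℝ) < η ^ 3 / 16 * N := by positivity
    rw [← mul_le_mul_iff_left₀ h4]
    calc _ ≤ _ := h1
      _ ≤ 16 * (B.card * (h * N)) := by linarith
      _ = _ := by field_simp; ring
  have hswap : ∑ x ∈ A, ((lowEnergy B ℓ η x).card : ℝ)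
      = ∑ y ∈ B, ((A.filter fun x =>
          energy B (drift B ℓ x) N y < (1 - η) ^ 2 * N).card : ℝ) := by
    unfold lowEnergy
    simp_rw [Finset.card_filter, Nat.cast_sum]
    exact Finset.sum_comm
  rw [hswap]
  calc _ ≤ ∑ y ∈ B, ((if y ∈ C then (A.card : ℝ) else 0) + r) := by
        refine Finset.sum_le_sum fun y hy => ?_
        split_ifs with hyC
        · have : ((A.filter fun x => energy B (drift B ℓ x) N y < (1 - η) ^ 2 * N).card : ℝ)
              ≤ A.card := Nat.cast_le.mpr (Finset.card_filter_le _ _)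
          linarith
        · have hdev : 2 * deviation B y ≤ η ^ 3 / 16 * N :=
            not_lt.mp fun h => hyC (Finset.mem_filter.mpr ⟨hy, h⟩)
          rw [zero_add]
          refine le_trans ?_ (card_energy_lt_le B hy hη hη1 hdev hℓ)
          exact Nat.cast_le.mpr
            (Finset.card_le_card (Finset.filter_subset_filter _ (Finset.subset_univ _)))
    _ = C.card * A.card + B.card * r := by
        rw [Finset.sum_add_distrib, Finset.sum_ite_mem, Finset.inter_eq_right.mpr
          (Finset.filter_subset _ _), Finset.sum_const, Finset.sum_const, nsmul_eq_mul,
          nsmul_eq_mul]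
    _ ≤ _ := by
        have := mul_le_mul_of_nonneg_right hCcard (Nat.cast_nonneg (α := ℝ) A.card)
        linarith

end Comparison

lemma xiProb_zero (N : ℕ) (A B : Finset (Fin N → Bool)) :
    xiProb N 0 A B = (1 / 4) ^ N * (A.card * B.card) := by
  simp [xiProb, xiMass_eq_prod]
  ring

lemma exp_mul_card_le_xiProb {N : ℕ} (hN : 0 < N) (A B : Finset (Fin N → Bool)) {a c ε η m : ℝ}
    (hc : 0 < c) (hε : 0 < ε) (hη : 0 < η) (hη1 : η ≤ 1 / 2) (hηc : 2 * c * η ≤ 1 / 8)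
    (hηε : c ^ 2 * (8 * c * η + 2 * η) ≤ ε / 2) (ha : |a| ≤ c / √N) (ha1 : |a| ≤ 1 / 2)
    (haε : |a| ≤ ε / (4 * c ^ 2))
    (hm : A.card * B.card * m = ∑ x ∈ A, ∑ y ∈ B, signInner x y)
    (hbad : ∑ x ∈ A, ((lowEnergy B (η * √N) η x).card : ℝ)
      ≤ η ^ 2 / Real.exp (2 * c ^ 2) * (A.card * B.card)) :
    (1 / 4) ^ N * (A.card * B.card) * Real.exp (a * m - ε) ≤ xiProb N a A B := by
  have hNpos : (0 : ℝ) < N := Nat.cast_pos.mpr hN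
  have hs : 0 < √(N : ℝ) := Real.sqrt_pos.mpr hNpos
  have hss : √(N : ℝ) ^ 2 = N := Real.sq_sqrt hNpos.le
  have has : |a| * √N ≤ c := (le_div_iff₀ hs).mp ha
  have hq : a ^ 2 * N ≤ c ^ 2 := by
    rw [← hss, ← sq_abs, ← mul_pow]
    gcongr
  have hq0 : 0 ≤ a ^ 2 * N := by positivity
  have hK : Real.exp (a ^ 2 * (N + (η * √N) ^ 2)) ≤ Real.exp (2 * c ^ 2) := by
    rw [Real.exp_le_exp, mul_pow, hss]
    have : a ^ 2 * (N + η ^ 2 * N) = a ^ 2 * N * (1 + η ^ 2) := by ring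
    rw [this]
    have h1 : 1 + η ^ 2 ≤ 2 := by nlinarith
    nlinarith
  have hρ : |a| * (η * √N) * 2 ≤ 2 * c * η := by
    calc _ = 2 * η * (|a| * √N) := by ring
      _ ≤ 2 * η * c := by gcongr
      _ = _ := by ring
  have hmain := card_mul_exp_le_sum_exp_signInner B A hm (by positivity) hρ hηc hη hK hbad
  have hcube : |a| ^ 3 * N ≤ ε / 4 := by
    calc |a| ^ 3 * N = |a| * (a ^ 2 * N) := by rw [← sq_abs a]; ring
      _ ≤ ε / (4 * c ^ 2) * c ^ 2 := by gcongr
      _ = _ := by field_simp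
  have hexp : a * m - ε + (a ^ 2 / 2 + 2 * |a| ^ 3) * N
      ≤ a * m + (1 / 2 - 4 * (2 * c * η)) * a ^ 2 * ((1 - η) ^ 2 * N * (1 - η)) := by
    have h1 : 1 / 2 - (8 * c * η + 2 * η) ≤ (1 / 2 - 4 * (2 * c * η)) * (1 - η) ^ 3 := by
      have h2 : 1 - 3 * η ≤ (1 - η) ^ 3 := by nlinarith [sq_nonneg η]
      have h3 : 0 ≤ 1 / 2 - 4 * (2 * c * η) := by linarith
      have h4 := mul_le_mul_of_nonneg_left h2 h3
      have h5 : 0 < c * η * η := by positivity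
      nlinarith
    have h2 := mul_le_mul_of_nonneg_left h1 hq0
    have h3 : a ^ 2 * N * (8 * c * η + 2 * η) ≤ c ^ 2 * (8 * c * η + 2 * η) := by gcongr
    nlinarith
  calc (1 / 4) ^ N * (A.card * B.card) * Real.exp (a * m - ε)
      ≤ (1 / 4) ^ N * (A.card * B.card * Real.exp (a * m + (1 / 2 - 4 * (2 * c * η)) * a ^ 2 *
          ((1 - η) ^ 2 * N * (1 - η)))) * Real.exp (-((a ^ 2 / 2 + 2 * |a| ^ 3) * N)) := by
        rw [mul_assoc, mul_assoc ((1 / 4 : ℝ) ^ N), mul_assoc ((A.card : ℝ) * B.card),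
          ← Real.exp_add]
        gcongr
        linarith
    _ ≤ (1 / 4) ^ N * (∑ x ∈ A, ∑ y ∈ B, Real.exp (a * signInner x y)) *
          Real.exp (-((a ^ 2 / 2 + 2 * |a| ^ 3) * N)) := by gcongr
    _ = ∑ x ∈ A, ∑ y ∈ B, (1 / 4) ^ N *
          Real.exp (a * signInner x y - (a ^ 2 / 2 + 2 * |a| ^ 3) * N) := by
        simp_rw [Finset.mul_sum, Finset.sum_mul]
        refine Finset.sum_congr rfl fun x _ => Finset.sum_congr rfl fun y _ => ?_
        rw [mul_assoc, ← Real.exp_add, sub_eq_add_neg]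
    _ ≤ _ := Finset.sum_le_sum fun x _ => Finset.sum_le_sum fun y _ =>
        exp_signInner_le_xiMass ha1 x y

/-- In a large rectangle, few pairs have deficient energy. -/
lemma sum_card_lowEnergy_le_of_large {N : ℕ} (hN : 0 < N) (A B : Finset (Fin N → Bool))
    {δ η τ : ℝ} (hη : 0 < η) (hη1 : η ≤ 1 / 2) (hδη : δ ≤ η ^ 2 / 16)
    (hδ : 256 * δ / η ^ 3 ≤ τ / 2) (hNτ : 3 * (N * Real.exp (-(η ^ 2 / 16) * N)) ≤ τ / 2)
    (hAB : Real.exp (-(δ * N)) ≤ (1 / 4) ^ N * (A.card * B.card)) :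
    ∑ x ∈ A, ((lowEnergy B (η * √N) η x).card : ℝ) ≤ τ * (A.card * B.card) := by
  have hN1 : (1 : ℝ) ≤ N := Nat.one_le_cast.mpr hN
  have hcard : ∀ S : Finset (Fin N → Bool), (S.card : ℝ) ≤ 2 ^ N := fun S => by
    have := Finset.card_le_univ S
    rw [Fintype.card_fun, Fintype.card_bool, Fintype.card_fin] at this
    exact_mod_cast this
  have h4 : (4 : ℝ) ^ N = 2 ^ N * 2 ^ N := by rw [← mul_pow]; norm_num
  have hAB' : 2 ^ N * 2 ^ N * Real.exp (-(δ * N)) ≤ A.card * B.card := by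
    rw [one_div, inv_pow, h4, inv_mul_eq_div, le_div_iff₀ (by positivity)] at hAB
    linarith
  have h2 : (0 : ℝ) < 2 ^ N := by positivity
  have hA : 2 ^ N * Real.exp (-(δ * N)) ≤ A.card := by
    have : (A.card : ℝ) * B.card ≤ A.card * 2 ^ N :=
      mul_le_mul_of_nonneg_left (hcard B) (Nat.cast_nonneg _)
    rw [← mul_le_mul_iff_left₀ h2]
    linarith
  have hB : 2 ^ N * Real.exp (-(δ * N)) ≤ B.card := by
    have : (A.card : ℝ) * B.card ≤ 2 ^ N * B.card :=
      mul_le_mul_of_nonneg_right (hcard A) (Nat.cast_nonneg _)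
    rw [← mul_le_mul_iff_left₀ h2]
    linarith
  have hB0 : (0 : ℝ) < B.card := lt_of_lt_of_le (by positivity) hB
  have hlog : Real.log (2 ^ N / B.card) ≤ δ * N := by
    rw [Real.log_le_iff_le_exp (by positivity), div_le_iff₀ hB0]
    rw [Real.exp_neg, ← div_eq_mul_inv, div_le_iff₀ (Real.exp_pos _)] at hB
    linarith
  have hA' : (2 : ℝ) ^ N ≤ A.card * Real.exp (δ * N) := by
    rwa [Real.exp_neg, ← div_eq_mul_inv, div_le_iff₀ (Real.exp_pos _)] at hA
  refine (sum_card_lowEnergy_le B A hη (by linarith) hN (by positivity) hlog).trans ?_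
  have hr : N * (√2 * Real.exp (-((η * √N) ^ 2 / 8))) + Real.exp (-(η * N / 8))
      ≤ 3 * N * Real.exp (-(η ^ 2 / 8) * N) := by
    have hsqrt : √2 ≤ 2 := Real.sqrt_le_iff.mpr ⟨by norm_num, by norm_num⟩
    have he : (η * √N) ^ 2 / 8 = η ^ 2 / 8 * N := by
      rw [mul_pow, Real.sq_sqrt (Nat.cast_nonneg N)]
      ring
    have he' : Real.exp (-(η * N / 8)) ≤ Real.exp (-(η ^ 2 / 8) * N) := by
      rw [Real.exp_le_exp]
      have : η ^ 2 * N ≤ η * N := by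
        gcongr
        nlinarith
      linarith
    rw [he, ← neg_mul]
    have hpos := Real.exp_pos (-(η ^ 2 / 8) * N)
    calc _ ≤ N * (2 * Real.exp (-(η ^ 2 / 8) * N)) + 1 * Real.exp (-(η ^ 2 / 8) * N) := by
          rw [one_mul]
          gcongr
      _ ≤ N * (2 * Real.exp (-(η ^ 2 / 8) * N)) + N * Real.exp (-(η ^ 2 / 8) * N) := by gcongr
      _ = _ := by ring
  have hsecond : 2 ^ N * (N * (√2 * Real.exp (-((η * √N) ^ 2 / 8))) + Real.exp (-(η * N / 8)))
      ≤ A.card * (τ / 2) := by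
    calc _ ≤ A.card * Real.exp (δ * N) * (3 * N * Real.exp (-(η ^ 2 / 8) * N)) := by gcongr
      _ ≤ A.card * Real.exp (η ^ 2 / 16 * N) * (3 * N * Real.exp (-(η ^ 2 / 8) * N)) := by gcongr
      _ = A.card * (3 * (N * (Real.exp (η ^ 2 / 16 * N) * Real.exp (-(η ^ 2 / 8) * N)))) := by ring
      _ = A.card * (3 * (N * Real.exp (-(η ^ 2 / 16) * N))) := by
          rw [← Real.exp_add]
          ring_nf
      _ ≤ _ := by gcongr
  have h1 := mul_le_mul_of_nonneg_left hδ
    (show (0 : ℝ) ≤ A.card * B.card by positivity)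
  have h3 := mul_le_mul_of_nonneg_left hsecond hB0.le
  linarith

lemma exists_signInner_mean {N : ℕ} (A B : Finset (Fin N → Bool)) :
    ∃ m : ℝ, A.card * B.card * m = ∑ x ∈ A, ∑ y ∈ B, signInner x y := by
  by_cases h : (A.card * B.card : ℝ) = 0
  · refine ⟨0, ?_⟩
    rcases mul_eq_zero.mp h with h | h <;>
      simp [Finset.card_eq_zero.mp (Nat.cast_eq_zero.mp h)]
  · exact ⟨_, mul_div_cancel₀ _ h⟩

theorem stmt1 :
    ∀ c > (0 : ℝ), ∀ ε > (0 : ℝ), ∃ δ > (0 : ℝ), ∃ N₀ : ℕ, ∀ N ≥ N₀,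
      ∀ p : ℝ, 0 ≤ p → p ≤ c / Real.sqrt N →
        ∀ A B : Finset (Fin N → Bool),
          xiProb N 0 A B ≥ (2 : ℝ) ^ (-δ * (N : ℝ)) →
          ∀ s : ℝ,
            (1 / 2) * (Real.exp s * xiProb N (-p) A B + Real.exp (-s) * xiProb N p A B)
              ≥ (1 - ε) * xiProb N 0 A B := by
  intro c hc ε hε
  obtain ⟨η, hη, hη1, hηc, hηε⟩ : ∃ η : ℝ, 0 < η ∧ η ≤ 1 / 2 ∧ 2 * c * η ≤ 1 / 8 ∧
      c ^ 2 * (8 * c * η + 2 * η) ≤ ε / 2 := by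
    refine ⟨min (1 / 2) (min (1 / (16 * c)) (ε / (2 * (c ^ 2 * (8 * c + 2))))), by positivity,
      min_le_left _ _, ?_, ?_⟩
    · have h := (min_le_right (1 / 2 : ℝ) _).trans
        (min_le_left (1 / (16 * c)) (ε / (2 * (c ^ 2 * (8 * c + 2)))))
      rw [le_div_iff₀ (by positivity)] at h
      linarith
    · have h := (min_le_right (1 / 2 : ℝ) _).trans
        (min_le_right (1 / (16 * c)) (ε / (2 * (c ^ 2 * (8 * c + 2)))))
      rw [le_div_iff₀ (by positivity)] at h
      linarith
  set τ := η ^ 2 / Real.exp (2 * c ^ 2) with hτ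
  have hτ0 : 0 < τ := by positivity
  obtain ⟨δ, hδ0, hδη, hδ⟩ : ∃ δ : ℝ, 0 < δ ∧ δ ≤ η ^ 2 / 16 ∧ 256 * δ / η ^ 3 ≤ τ / 2 := by
    refine ⟨min (η ^ 2 / 16) (τ * η ^ 3 / 512), by positivity, min_le_left _ _, ?_⟩
    rw [div_le_iff₀ (by positivity)]
    linarith [min_le_right (η ^ 2 / 16) (τ * η ^ 3 / 512)]
  have hlim₁ : Filter.Tendsto (fun N : ℕ => 3 * ((N : ℝ) * Real.exp (-(η ^ 2 / 16) * N)))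
      Filter.atTop (nhds 0) := by
    have h := (tendsto_rpow_mul_exp_neg_mul_atTop_nhds_zero 1 (η ^ 2 / 16)
      (by positivity)).comp (tendsto_natCast_atTop_atTop (R := ℝ))
    simpa using h.const_mul 3
  have hlim₂ : Filter.Tendsto (fun N : ℕ => c / √(N : ℝ)) Filter.atTop (nhds 0) :=
    (Real.tendsto_sqrt_atTop.comp tendsto_natCast_atTop_atTop).const_div_atTop c
  have hsmall : 0 < min (1 / 2) (ε / (4 * c ^ 2)) := by positivity
  obtain ⟨N₀, hN₀⟩ := Filter.eventually_atTop.mp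
    ((hlim₁.eventually_le_const (half_pos hτ0)).and
      ((hlim₂.eventually_le_const hsmall).and (Filter.eventually_gt_atTop 0)))
  refine ⟨δ, hδ0, N₀, fun N hN p hp hpc A B hAB s => ?_⟩
  obtain ⟨hNτ, hNc, hNpos⟩ := hN₀ N hN
  have hlarge : Real.exp (-(δ * N)) ≤ (1 / 4) ^ N * (A.card * B.card) := by
    rw [← xiProb_zero]
    refine le_trans ?_ hAB
    rw [Real.rpow_def_of_pos two_pos, Real.exp_le_exp]
    have h1 : 0 ≤ δ * N := by positivity
    have h2 : Real.log 2 ≤ 1 := by linarith [Real.log_two_lt_d9]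
    nlinarith
  have hbad := sum_card_lowEnergy_le_of_large hNpos A B hη hη1 hδη hδ hNτ hlarge
  obtain ⟨m, hm⟩ := exists_signInner_mean A B
  have hsign : ∀ a : ℝ, |a| = p → (1 / 4) ^ N * (A.card * B.card) * Real.exp (a * m - ε)
      ≤ xiProb N a A B := fun a ha =>
    exp_mul_card_le_xiProb hNpos A B hc hε hη hη1 hηc hηε (ha.trans_le hpc)
      (ha.trans_le (hpc.trans (hNc.trans (min_le_left _ _))))
      (ha.trans_le (hpc.trans (hNc.trans (min_le_right _ _)))) hm hbad
  have hplus := hsign p (abs_of_nonneg hp)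
  have hminus := hsign (-p) (by rw [abs_neg, abs_of_nonneg hp])
  rw [xiProb_zero]
  set Z : ℝ := (1 / 4) ^ N * (A.card * B.card) with hZ
  have hZ0 : 0 ≤ Z := by positivity
  have hcosh : 1 - ε ≤ (Real.exp s * Real.exp (-p * m - ε)
      + Real.exp (-s) * Real.exp (p * m - ε)) / 2 := by
    have h1 := Real.one_le_cosh (s - p * m)
    have h2 := Real.one_sub_le_exp_neg ε
    calc 1 - ε ≤ Real.exp (-ε) * 1 := by linarith
      _ ≤ Real.exp (-ε) * Real.cosh (s - p * m) := by gcongr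
      _ = _ := by
        rw [Real.cosh_eq, mul_div_assoc', mul_add, ← Real.exp_add, ← Real.exp_add, ← Real.exp_add,
          ← Real.exp_add]
        ring_nf
  calc (1 - ε) * Z ≤ (Real.exp s * Real.exp (-p * m - ε)
      + Real.exp (-s) * Real.exp (p * m - ε)) / 2 * Z := by gcongr
    _ = 1 / 2 * (Real.exp s * (Z * Real.exp (-p * m - ε))
        + Real.exp (-s) * (Z * Real.exp (p * m - ε))) := by ring
    _ ≤ _ := by gcongr
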